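/- arXiv:cs/0609100 — 10 statements merged into one kernel-verified Lean document; each statement's English description precedes it below -/
import Mathlib

section
/- Let N ≥ 1, let X = Fin N → ℝ with inner product ⟨u,v⟩ = Σᵢ uᵢvᵢ and norm ‖u‖, let J : X → ℝ be nonnegative, convex, lower semicontinuous, positively 1-homogeneous (J(t•u) = t·J(u) for all t ≥ 0), and satisfy the generalized co-area formula J(u) = ∫_ℝ J(χ_{u>t}) dt for all u ∈ X, where χ_{u>t} ∈ X is the indicator function (χ_{u>t})ᵢ = 1 if uᵢ > t and 0 otherwise. Let λ > 0, f ∈ X, and suppose w ∈ X minimizes u ↦ J(u) + (1/(2λ))‖u − f‖² over X. Then for every s ∈ ℝ, the binary function θ = χ_{w>s} minimizes θ ↦ λ·J(θ) + Σᵢ (s − fᵢ)θᵢ over all θ ∈ X with θᵢ ∈ {0,1} for all i. -/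
open MeasureTheory

lemma subgrad_aux {N : ℕ} (J : (Fin N → ℝ) → ℝ)
    (hJconvex : ConvexOn ℝ Set.univ J)
    (lam : ℝ) (hlam : 0 < lam) (f : Fin N → ℝ) (w : Fin N → ℝ)
    (hw : ∀ u : Fin N → ℝ,
      J w + (1 / (2 * lam)) * ∑ i, (w i - f i) ^ 2 ≤
      J u + (1 / (2 * lam)) * ∑ i, (u i - f i) ^ 2) (u : Fin N → ℝ) :
    ∑ i, (f i - w i) / lam * (u i - w i) ≤ J u - J w := by
  set P := ∑ i, (f i - w i) / lam * (u i - w i) with hP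
  set Q := (1 / (2 * lam)) * ∑ i, (u i - w i) ^ 2 with hQ
  have key : ∀ τ : ℝ, 0 < τ → τ ≤ 1 → P ≤ J u - J w + τ * Q := by
    intro τ h0 h1
    have h2 := hw ((1 - τ) • w + τ • u)
    have h3 := hJconvex.2 (Set.mem_univ w) (Set.mem_univ u) (sub_nonneg.2 h1) h0.le (by ring)
    simp only [smul_eq_mul] at h3
    have h4 : (1 / (2 * lam)) * ∑ i, (((1 - τ) • w + τ • u) i - f i) ^ 2
        = (1 / (2 * lam)) * ∑ i, (w i - f i) ^ 2 - τ * P + τ ^ 2 * Q := by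
      rw [hP, hQ]
      simp only [Finset.mul_sum, ← Finset.sum_sub_distrib, ← Finset.sum_add_distrib]
      refine Finset.sum_congr rfl fun i _ => ?_
      simp only [Pi.add_apply, Pi.smul_apply, smul_eq_mul]
      field_simp
      ring
    rw [h4] at h2
    have h5 : τ * P ≤ τ * (J u - J w + τ * Q) := by nlinarith
    exact le_of_mul_le_mul_left h5 h0
  have hQ0 : 0 ≤ Q := by positivity
  refine le_of_forall_pos_le_add fun ε hε => ?_
  have hτ : 0 < min 1 (ε / (Q + 1)) := by positivity
  have h6 := key _ hτ (min_le_left _ _)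
  have h7 : min 1 (ε / (Q + 1)) * Q ≤ ε := by
    calc min 1 (ε / (Q + 1)) * Q ≤ ε / (Q + 1) * Q := by gcongr; exact min_le_right _ _
      _ ≤ ε / (Q + 1) * (Q + 1) := by gcongr; linarith
      _ = ε := by field_simp
  linarith

/-- indicator of the strict upper level set -/
noncomputable def chi {N : ℕ} (u : Fin N → ℝ) (t : ℝ) : Fin N → ℝ :=
  fun i => if u i > t then (1 : ℝ) else 0

lemma chi_apply_eq {N : ℕ} (u : Fin N → ℝ) (i : Fin N) :
    (fun t => chi u t i) = (Set.Iio (u i)).indicator 1 := by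
  funext t
  simp [chi, Set.indicator_apply]

lemma measurable_chi {N : ℕ} (u : Fin N → ℝ) : Measurable (chi u) := by
  refine measurable_pi_lambda _ fun i => ?_
  rw [chi_apply_eq]
  exact measurable_one.indicator measurableSet_Iio

lemma finite_binary {N : ℕ} : {θ : Fin N → ℝ | ∀ i, θ i ∈ ({0, 1} : Set ℝ)}.Finite :=
  Set.Finite.pi' fun _ => by simp

lemma J_bdd {N : ℕ} (J : (Fin N → ℝ) → ℝ) (u : Fin N → ℝ) : ∃ C, ∀ t, J (chi u t) ≤ C := by
  obtain ⟨C, hC⟩ := ((finite_binary (N := N)).image J).bddAbove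
  refine ⟨C, fun t => hC ⟨_, fun i => ?_, rfl⟩⟩
  unfold chi
  split_ifs <;> simp

lemma J_one {N : ℕ} (J : (Fin N → ℝ) → ℝ) 
    (hJcoarea : ∀ u : Fin N → ℝ, J u = ∫ t : ℝ, J (chi u t)) : J 1 = 0 := by
  by_contra h
  have hni : ¬ Integrable (fun t => J (chi (1 : Fin N → ℝ) t)) := by
    intro hi
    have h1 : IntegrableOn (fun _ : ℝ => J 1) (Set.Iio (1 : ℝ)) := by
      refine (hi.integrableOn (s := Set.Iio 1)).congr_fun ?_ measurableSet_Iio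
      intro t ht
      have : chi (1 : Fin N → ℝ) t = 1 := by
        funext i
        simpa [chi] using ht
      simp [this]
    rw [integrableOn_const_iff] at h1
    simp [h] at h1
  apply h
  rw [hJcoarea 1]
  exact integral_undef hni

lemma J_neg_one {N : ℕ} (J : (Fin N → ℝ) → ℝ) (h0 : J 0 = 0) (h1 : J 1 = 0)
    (hJcoarea : ∀ u : Fin N → ℝ, J u = ∫ t : ℝ, J (chi u t)) : J (-1) = 0 := by
  rw [hJcoarea]
  have : ∀ t, J (chi (-1 : Fin N → ℝ) t) = 0 := by
    intro t
    by_cases ht : t < -1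
    · rw [← h1]; congr 1; funext i; simp [chi, ht]
    · rw [← h0]; congr 1; funext i; simp [chi]; linarith
  simp [this]

lemma chi_eq {N : ℕ} (J : (Fin N → ℝ) → ℝ) (hJnonneg : ∀ u, 0 ≤ J u)
    (hm : Measurable J) (h0 : J 0 = 0) (h1 : J 1 = 0)
    (hJcoarea : ∀ u : Fin N → ℝ, J u = ∫ t : ℝ, J (chi u t))
    (p w : Fin N → ℝ) (hp : ∀ u, ∑ i, p i * u i ≤ J u) (hpw : J w ≤ ∑ i, p i * w i)
    (hp1 : ∑ i, p i = 0) (s : ℝ) : J (chi w s) ≤ ∑ i, p i * chi w s i := by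
  by_contra! hlt
  -- bound
  obtain ⟨M, hM⟩ : ∃ M : ℝ, |s| + 1 ≤ M ∧ ∀ i, |w i| ≤ M := by
    refine ⟨|s| + 1 + ∑ i, |w i|, ?_, fun i => ?_⟩
    · have : 0 ≤ ∑ i, |w i| := by positivity
      linarith
    · have := Finset.single_le_sum (f := fun i => |w i|) (fun i _ => abs_nonneg _)
        (Finset.mem_univ i)
      have := abs_nonneg s
      linarith
  obtain ⟨hMs, hMw⟩ := hM
  have hs := abs_lt.1 (show |s| < M by linarith)
  -- gap
  obtain ⟨ε, hε, hgap⟩ : ∃ r, s < r ∧ ∀ i, s < w i → r ≤ w i := by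
    by_cases hne : (Finset.univ.filter fun i => s < w i).Nonempty
    · obtain ⟨j, hj, hj'⟩ := Finset.exists_min_image _ w hne
      simp at hj hj'
      exact ⟨w j, hj, hj'⟩
    · refine ⟨s + 1, by linarith, fun i hi => (hne ⟨i, by simp [hi]⟩).elim⟩
  obtain ⟨r, hsr, hrM, hrε⟩ : ∃ r, s < r ∧ r ≤ M ∧ r ≤ ε :=
    ⟨min M ε, lt_min hs.2 hε, min_le_left _ _, min_le_right _ _⟩
  have hconst : ∀ t ∈ Set.Ico s r, chi w t = chi w s := by
    intro t ht
    funext i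
    unfold chi
    by_cases hi : s < w i
    · have := hgap i hi
      rw [if_pos (by linarith [ht.2]), if_pos hi]
    · rw [if_neg (by linarith [ht.1]), if_neg hi]
  obtain ⟨C, hC⟩ := J_bdd J w
  have hJint : IntegrableOn (fun t => J (chi w t)) (Set.Ico (-M) M) := by
    refine Measure.integrableOn_of_bounded (M := C) (by simp)
      (hm.comp (measurable_chi w)).aestronglyMeasurable ?_
    filter_upwards with t
    rw [Real.norm_eq_abs, abs_of_nonneg (hJnonneg _)]
    exact hC t
  have hcint : ∀ i, IntegrableOn (fun t => p i * chi w t i) (Set.Ico (-M) M) := by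
    intro i
    refine Integrable.const_mul ?_ _
    rw [chi_apply_eq]
    exact (integrable_const (1 : ℝ)).indicator measurableSet_Iio
  have hcval : ∀ i, ∫ t in Set.Ico (-M) M, p i * chi w t i = p i * (w i + M) := by
    intro i
    rw [integral_const_mul, chi_apply_eq, setIntegral_indicator measurableSet_Iio]
    have hi := abs_le.1 (hMw i)
    have : Set.Ico (-M) M ∩ Set.Iio (w i) = Set.Ico (-M) (w i) := by
      ext t; simp; intro _ _; linarith
    rw [this]
    simp [hi.1]
    left; linarith
  have hJval : ∫ t in Set.Ico (-M) M, J (chi w t) = J w := by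
    rw [hJcoarea w]
    refine setIntegral_eq_integral_of_forall_compl_eq_zero fun t ht => ?_
    by_cases h : t < -M
    · rw [← h1]; congr 1; funext i
      have hi := abs_le.1 (hMw i)
      simp only [chi, Pi.one_apply]
      rw [if_pos (by linarith)]
    · rw [← h0]; congr 1; funext i
      have hi := abs_le.1 (hMw i)
      have : M ≤ t := by
        by_contra! h'
        exact ht ⟨not_lt.1 h, h'⟩
      simp only [chi, Pi.zero_apply]
      rw [if_neg (by linarith)]
  have hgint : IntegrableOn (fun t => J (chi w t) - ∑ i, p i * chi w t i) (Set.Ico (-M) M) :=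
    Integrable.sub hJint (integrable_finsetSum _ fun i _ => hcint i)
  have hgval : ∫ t in Set.Ico (-M) M, (J (chi w t) - ∑ i, p i * chi w t i) ≤ 0 := by
    rw [integral_sub hJint (integrable_finsetSum _ fun i _ => hcint i), hJval,
      integral_finsetSum _ fun i _ => hcint i]
    simp only [hcval, mul_add, Finset.sum_add_distrib, ← Finset.sum_mul, hp1]
    linarith
  have hsub : Set.Ico s r ⊆ Set.Ico (-M) M := Set.Ico_subset_Ico hs.1.le hrM
  have hmono : ∫ t in Set.Ico s r, (J (chi w t) - ∑ i, p i * chi w t i) ≤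
      ∫ t in Set.Ico (-M) M, (J (chi w t) - ∑ i, p i * chi w t i) := by
    refine setIntegral_mono_set hgint ?_ hsub.eventuallyLE
    filter_upwards with t
    simpa using hp (chi w t)
  have hc : ∫ t in Set.Ico s r, (J (chi w t) - ∑ i, p i * chi w t i) =
      (r - s) * (J (chi w s) - ∑ i, p i * chi w s i) := by
    rw [setIntegral_congr_fun (g := fun _ => J (chi w s) - ∑ i, p i * chi w s i)
      measurableSet_Ico (fun t ht => by simp only [hconst t ht])]
    simp [hsr.le]
  have : 0 < (r - s) * (J (chi w s) - ∑ i, p i * chi w s i) :=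
    mul_pos (by linarith) (by linarith)
  linarith

/-- Thresholding the ROF minimizer at level `s` (strict upper level set) solves the
discrete shape optimization problem. -/
theorem threshold_strict_solves_shape_optimization
    (N : ℕ) (hN : 1 ≤ N)
    (J : (Fin N → ℝ) → ℝ)
    (hJnonneg : ∀ u, 0 ≤ J u)
    (hJconvex : ConvexOn ℝ Set.univ J)
    (hJlsc : LowerSemicontinuous J)
    (hJhom : ∀ t : ℝ, 0 ≤ t → ∀ u : Fin N → ℝ, J (t • u) = t * J u)
    (hJcoarea : ∀ u : Fin N → ℝ,
      J u = ∫ t : ℝ, J (fun i => if u i > t then (1 : ℝ) else 0))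
    (lam : ℝ) (hlam : 0 < lam) (f : Fin N → ℝ) (w : Fin N → ℝ)
    (hw : ∀ u : Fin N → ℝ,
      J w + (1 / (2 * lam)) * ∑ i, (w i - f i) ^ 2 ≤
      J u + (1 / (2 * lam)) * ∑ i, (u i - f i) ^ 2)
    (s : ℝ) :
    ∀ θ : Fin N → ℝ, (∀ i, θ i = 0 ∨ θ i = 1) →
      lam * J (fun i => if w i > s then (1 : ℝ) else 0) +
          ∑ i, (s - f i) * (if w i > s then (1 : ℝ) else 0) ≤
        lam * J θ + ∑ i, (s - f i) * θ i := by
  intro θ hθ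
  have h0 : J 0 = 0 := by simpa using hJhom 0 le_rfl 0
  have h1 := J_one J hJcoarea
  have hn1 := J_neg_one J h0 h1 hJcoarea
  have hsg := subgrad_aux J hJconvex lam hlam f w hw
  obtain ⟨p, hpdef⟩ : ∃ p : Fin N → ℝ, p = fun i => (f i - w i) / lam := ⟨_, rfl⟩
  have hsg' : ∀ u, ∑ i, p i * u i - ∑ i, p i * w i ≤ J u - J w := by
    intro u
    have := hsg u
    simpa [hpdef, mul_sub, Finset.sum_sub_distrib] using this
  have hpw : J w ≤ ∑ i, p i * w i := by
    have := hsg' 0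
    simp [h0] at this
    linarith
  have hpw2 : ∑ i, p i * w i ≤ J w := by
    have := hsg' ((2 : ℝ) • w)
    rw [hJhom 2 (by norm_num)] at this
    have h : ∑ i, p i * ((2 : ℝ) • w) i = 2 * ∑ i, p i * w i := by
      rw [Finset.mul_sum]
      exact Finset.sum_congr rfl fun i _ => by simp; ring
    linarith
  have hp : ∀ u, ∑ i, p i * u i ≤ J u := fun u => by linarith [hsg' u]
  have hp1 : ∑ i, p i = 0 := by
    have ha := hp 1
    have hb := hp (-1)
    simp [h1] at ha
    simp [hn1] at hb
    linarith
  have hchi := chi_eq J hJnonneg hJlsc.measurable h0 h1 hJcoarea p w hp hpw hp1 s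
  have hlp : ∀ u : Fin N → ℝ, lam * ∑ i, p i * u i = ∑ i, (f i - w i) * u i := by
    intro u
    rw [Finset.mul_sum]
    refine Finset.sum_congr rfl fun i _ => ?_
    rw [hpdef]
    field_simp
  have hA := mul_le_mul_of_nonneg_left hchi hlam.le
  have hB := mul_le_mul_of_nonneg_left (hp θ) hlam.le
  rw [hlp] at hA hB
  have hC : ∑ i, (f i - w i) * chi w s i + ∑ i, (s - f i) * chi w s i ≤
      ∑ i, (f i - w i) * θ i + ∑ i, (s - f i) * θ i := by
    rw [← Finset.sum_add_distrib, ← Finset.sum_add_distrib]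
    refine Finset.sum_le_sum fun i _ => ?_
    unfold chi
    rcases hθ i with h | h <;> rw [h] <;> split_ifs <;> linarith
  change lam * J (chi w s) + ∑ i, (s - f i) * chi w s i ≤ _
  linarith
end

section
/- Let N ≥ 1, let X = Fin N → ℝ with inner product ⟨u,v⟩ = Σᵢ uᵢvᵢ and norm ‖u‖, let J : X → ℝ be nonnegative, convex, lower semicontinuous, positively 1-homogeneous, and satisfy the generalized co-area formula J(u) = ∫_ℝ J(χ_{u>t}) dt for all u ∈ X. Let λ > 0, f ∈ X, and suppose w ∈ X minimizes u ↦ J(u) + (1/(2λ))‖u − f‖² over X. Then for every s ∈ ℝ, the binary function θ = χ_{w≥s}, defined by θᵢ = 1 if wᵢ ≥ s and 0 otherwise, minimizes θ ↦ λ·J(θ) + Σᵢ (s − fᵢ)θᵢ over all θ ∈ X with θᵢ ∈ {0,1} for all i. -/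
open MeasureTheory

/-- A linear-plus-quadratic function nonnegative for small positive arguments has nonnegative
slope. -/
lemma slope_nonneg_aux (a b : ℝ) (h : ∀ e : ℝ, 0 < e → e ≤ 1 → 0 ≤ e * a + e ^ 2 * b) :
    0 ≤ a := by
  by_contra hc
  push Not at hc
  have hb : 0 < |b| + 1 := by positivity
  have hd : 0 < |b| + 1 - a := by linarith
  have h1 : 0 < (-a) / (|b| + 1 - a) := by apply div_pos <;> linarith
  have h2 : (-a) / (|b| + 1 - a) ≤ 1 := by rw [div_le_one hd]; linarith
  have h3 := h _ h1 h2
  set e := (-a) / (|b| + 1 - a) with he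
  have h4 : e * (|b| + 1 - a) = -a := by rw [he]; field_simp
  have h5 : 0 ≤ e * (a + e * b) := by nlinarith
  have h6 : 0 ≤ a + e * b := nonneg_of_mul_nonneg_right h5 h1
  have h7 : e * b ≤ e * |b| := mul_le_mul_of_nonneg_left (le_abs_self b) h1.le
  nlinarith


/-- Thresholding the ROF minimizer at level `s` (strict upper level set) solves the
discrete shape optimization problem. -/
theorem threshold_nonstrict_solves_shape_optimization
    (N : ℕ) (hN : 1 ≤ N)
    (J : (Fin N → ℝ) → ℝ)
    (hJnonneg : ∀ u, 0 ≤ J u)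
    (hJconvex : ConvexOn ℝ Set.univ J)
    (hJlsc : LowerSemicontinuous J)
    (hJhom : ∀ t : ℝ, 0 ≤ t → ∀ u : Fin N → ℝ, J (t • u) = t * J u)
    (hJcoarea : ∀ u : Fin N → ℝ,
      J u = ∫ t : ℝ, J (fun i => if u i > t then (1 : ℝ) else 0))
    (lam : ℝ) (hlam : 0 < lam) (f : Fin N → ℝ) (w : Fin N → ℝ)
    (hw : ∀ u : Fin N → ℝ,
      J w + (1 / (2 * lam)) * ∑ i, (w i - f i) ^ 2 ≤
      J u + (1 / (2 * lam)) * ∑ i, (u i - f i) ^ 2)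
    (s : ℝ) :
    ∀ θ : Fin N → ℝ, (∀ i, θ i = 0 ∨ θ i = 1) →
      lam * J (fun i => if w i ≥ s then (1 : ℝ) else 0) +
          ∑ i, (s - f i) * (if w i ≥ s then (1 : ℝ) else 0) ≤
        lam * J θ + ∑ i, (s - f i) * θ i := by
  have hJ0 : J 0 = 0 := by simpa using hJhom 0 le_rfl 0
  -- J vanishes on the constant function 1
  have hJ1 : J (fun _ => 1) = 0 := by
    by_contra hne
    have hni : ¬ Integrable (fun t : ℝ => J (fun _ : Fin N => if (1 : ℝ) > t then (1 : ℝ) else 0)) := by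
      intro hi
      have h1 : IntegrableOn (fun _ : ℝ => J (fun _ : Fin N => (1 : ℝ))) (Set.Iio 1) := by
        refine (hi.integrableOn (s := Set.Iio 1)).congr_fun ?_ measurableSet_Iio
        intro t ht
        have ht' : (1 : ℝ) > t := ht
        simp [ht']
      rw [integrableOn_const_iff] at h1
      simp [hne] at h1
    have := hJcoarea (fun _ => 1)
    rw [integral_undef hni] at this
    exact hne this
  have hJn1 : J (fun _ => -1) = 0 := by
    rw [hJcoarea]
    have : ∀ t : ℝ, J (fun _ : Fin N => if (-1 : ℝ) > t then (1 : ℝ) else 0) = 0 := by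
      intro t
      by_cases ht : (-1 : ℝ) > t
      · simpa [ht] using hJ1
      · simp only [ht, if_false]; exact hJ0
    simp [this]
  have hsub : ∀ u v : Fin N → ℝ, J (u + v) ≤ J u + J v := by
    intro u v
    have h := hJconvex.2 (Set.mem_univ u) (Set.mem_univ v) (by norm_num : (0 : ℝ) ≤ 1 / 2)
      (by norm_num : (0 : ℝ) ≤ 1 / 2) (by norm_num)
    rw [← smul_add, hJhom _ (by norm_num)] at h
    simp only [smul_eq_mul] at h
    linarith
  -- the subgradient
  obtain ⟨p, hp⟩ : ∃ p : Fin N → ℝ, ∀ i, lam * p i = f i - w i :=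
    ⟨fun i => (f i - w i) / lam, fun i => by field_simp⟩
  have hexp : ∀ (e : ℝ) (v : Fin N → ℝ),
      (1 / (2 * lam)) * ∑ i, ((w + e • v) i - f i) ^ 2 =
      (1 / (2 * lam)) * ∑ i, (w i - f i) ^ 2 - e * ∑ i, p i * v i
        + e ^ 2 * ((1 / (2 * lam)) * ∑ i, v i ^ 2) := by
    intro e v
    simp only [Finset.mul_sum, ← Finset.sum_sub_distrib, ← Finset.sum_add_distrib]
    refine Finset.sum_congr rfl fun i _ => ?_
    have : f i = w i + lam * p i := by rw [hp]; ring
    rw [this]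
    simp only [Pi.add_apply, Pi.smul_apply, smul_eq_mul]
    field_simp
    ring
  have hge : ∀ v : Fin N → ℝ, ∑ i, p i * v i ≤ J v := by
    intro v
    have := slope_nonneg_aux (J v - ∑ i, p i * v i) ((1 / (2 * lam)) * ∑ i, v i ^ 2) (by
      intro e he _
      have h1 := hw (w + e • v)
      rw [hexp] at h1
      have h2 := hsub w (e • v)
      rw [hJhom e he.le] at h2
      linarith)
    linarith
  have hle : J w ≤ ∑ i, p i * w i := by
    have := slope_nonneg_aux (∑ i, p i * w i - J w) ((1 / (2 * lam)) * ∑ i, w i ^ 2) (by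
      intro e he he1
      have h1 := hw (w + (-e) • w)
      rw [hexp] at h1
      have h2 : w + (-e) • w = (1 - e) • w := by
        rw [sub_smul, one_smul, neg_smul, sub_eq_add_neg]
      rw [h2, hJhom _ (by linarith)] at h1
      nlinarith)
    linarith
  have hp1 : ∑ i, p i = 0 := by
    have h1 := hge (fun _ => 1)
    have h2 := hge (fun _ => -1)
    rw [hJ1] at h1
    rw [hJn1] at h2
    simp at h1 h2
    linarith
  -- level sets are constant just below s
  obtain ⟨r, hrs, hr⟩ : ∃ r < s, ∀ t ∈ Set.Ioo r s, ∀ i, (w i > t ↔ w i ≥ s) := by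
    have hev : ∀ᶠ t in nhdsWithin s (Set.Iio s), ∀ i, (w i > t ↔ w i ≥ s) := by
      rw [Filter.eventually_all]
      intro i
      by_cases hi : w i ≥ s
      · filter_upwards [self_mem_nhdsWithin] with t ht
        have : t < s := ht
        exact ⟨fun _ => hi, fun _ => lt_of_lt_of_le this hi⟩
      · have hi' : w i < s := not_le.mp hi
        filter_upwards [mem_nhdsWithin_of_mem_nhds (Ioi_mem_nhds hi')] with t ht
        have : w i < t := ht
        exact ⟨fun h => absurd h (not_lt.mpr this.le), fun h => absurd h hi⟩
    obtain ⟨r, hr1, hr2⟩ := (mem_nhdsLT_iff_exists_Ioo_subset).1 hev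
    exact ⟨r, hr1, fun t ht => hr2 ht⟩
  obtain ⟨M, hMr, hMs, hMw⟩ : ∃ M : ℝ, |r| < M ∧ |s| < M ∧ ∀ i, |w i| < M := by
    refine ⟨|r| + |s| + ∑ i, |w i| + 1, ?_, ?_, fun i => ?_⟩
    · have : 0 ≤ ∑ i, |w i| := Finset.sum_nonneg fun i _ => abs_nonneg _
      linarith [abs_nonneg s]
    · have : 0 ≤ ∑ i, |w i| := Finset.sum_nonneg fun i _ => abs_nonneg _
      linarith [abs_nonneg r]
    · have : |w i| ≤ ∑ i, |w i| :=
        Finset.single_le_sum (f := fun i => |w i|) (fun i _ => abs_nonneg _) (Finset.mem_univ i)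
      linarith [abs_nonneg r, abs_nonneg s]
  set I : Set ℝ := Set.Ioc (-M) M with hI
  let X : ℝ → Fin N → ℝ := fun t i => if w i > t then (1 : ℝ) else 0
  have hXi : ∀ i, Measurable (fun t => X t i) := fun i =>
    Measurable.ite measurableSet_Iio measurable_const measurable_const
  have hXm : Measurable X := measurable_pi_lambda _ hXi
  have hJX : Measurable (fun t => J (X t)) := hJlsc.measurable.comp hXm
  have hJint : IntegrableOn (fun t => J (X t)) I := by
    have hfin : (Set.pi Set.univ (fun _ : Fin N => ({0, 1} : Set ℝ))).Finite :=
      Set.Finite.pi' (fun _ => Set.toFinite _) |>.subset (fun x hx i => hx i (Set.mem_univ i))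
    obtain ⟨C, hC⟩ := (hfin.image J).bddAbove
    refine Measure.integrableOn_of_bounded (M := C) (by simp [hI])
      hJX.aestronglyMeasurable (Filter.Eventually.of_forall fun t => ?_)
    rw [Real.norm_of_nonneg (hJnonneg _)]
    refine hC ⟨X t, fun i _ => ?_, rfl⟩
    by_cases h : w i > t <;> simp [X, h]
  have hXint : ∀ i, IntegrableOn (fun t => X t i) I := by
    intro i
    refine Measure.integrableOn_of_bounded (M := 1) (by simp [hI])
      (hXi i).aestronglyMeasurable (Filter.Eventually.of_forall fun t => ?_)
    by_cases h : w i > t <;> simp [X, h]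
  have hXval : ∀ i, ∫ t in I, X t i = w i + M := by
    intro i
    have h1 : (fun t => X t i) = (Set.Iio (w i)).indicator (fun _ => (1 : ℝ)) := by
      funext t
      simp [X, Set.indicator]
    have hlt := abs_lt.1 (hMw i)
    have h2 : I ∩ Set.Iio (w i) = Set.Ioo (-M) (w i) := by
      ext t
      simp only [hI, Set.mem_inter_iff, Set.mem_Ioc, Set.mem_Iio, Set.mem_Ioo]
      constructor
      · rintro ⟨⟨a, b⟩, c⟩; exact ⟨a, c⟩
      · rintro ⟨a, c⟩; exact ⟨⟨a, by linarith⟩, c⟩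
    rw [h1, setIntegral_indicator measurableSet_Iio, h2]
    simp
    linarith
  have hJval : ∫ t in I, J (X t) = J w := by
    rw [hJcoarea w]
    refine setIntegral_eq_integral_of_forall_compl_eq_zero fun t ht => ?_
    by_cases h : t ≤ -M
    · have : X t = fun _ => 1 := by
        funext i
        have : w i > t := by linarith [(abs_lt.1 (hMw i)).1]
        simp [X, this]
      rw [this, hJ1]
    · have hM : M < t := by
        by_contra h'
        exact ht ⟨not_le.1 h, not_lt.1 h'⟩
      have : X t = 0 := by
        funext i
        have : ¬ w i > t := by linarith [(abs_lt.1 (hMw i)).2]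
        simp [X, this]
      rw [this, hJ0]
  have hsumint : IntegrableOn (fun t => ∑ i, p i * X t i) I :=
    integrable_finsetSum _ fun i _ => (hXint i).const_mul (p i)
  have hsumval : ∫ t in I, ∑ i, p i * X t i = ∑ i, p i * w i := by
    rw [integral_finsetSum _ fun i _ => (hXint i).const_mul (p i)]
    simp only [integral_const_mul, hXval, mul_add, Finset.sum_add_distrib]
    rw [← Finset.sum_mul, hp1]
    ring
  have hnn : ∀ t, 0 ≤ J (X t) - ∑ i, p i * X t i := fun t => sub_nonneg.2 (hge _)
  have hzero : ∫ t in I, (J (X t) - ∑ i, p i * X t i) = 0 := by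
    rw [integral_sub hJint hsumint, hJval, hsumval]
    linarith [hge w]
  rw [integral_eq_zero_iff_of_nonneg hnn (hJint.sub hsumint)] at hzero
  have hsubset : Set.Ioo r s ⊆ I := fun t ht =>
    ⟨by linarith [(abs_lt.1 hMr).1, ht.1], by linarith [(abs_lt.1 hMs).2, ht.2]⟩
  have hz2 := ae_restrict_of_ae_restrict_of_subset hsubset hzero
  have hne : Filter.NeBot (ae (volume.restrict (Set.Ioo r s))) := by
    rw [ae_neBot, Ne, Measure.restrict_eq_zero]
    simp [hrs]
  obtain ⟨t, ht0, ht⟩ := (hz2.and (ae_restrict_mem measurableSet_Ioo)).exists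
  have hXt : (fun i => if w i ≥ s then (1 : ℝ) else 0) = X t := by
    funext i
    simp only [X, hr t ht i]
  have hkey : J (X t) = ∑ i, p i * X t i := by
    have : J (X t) - ∑ i, p i * X t i = 0 := ht0
    linarith
  intro θ hθ
  have e1 : lam * J (fun i => if w i ≥ s then (1 : ℝ) else 0) +
      ∑ i, (s - f i) * (if w i ≥ s then (1 : ℝ) else 0) =
      ∑ i, (s - w i) * (if w i ≥ s then (1 : ℝ) else 0) := by
    have hx : ∀ i, (if w i ≥ s then (1 : ℝ) else 0) = X t i := fun i => congrFun hXt i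
    rw [hXt, hkey]
    simp only [hx]
    rw [Finset.mul_sum, ← Finset.sum_add_distrib]
    refine Finset.sum_congr rfl fun i _ => ?_
    linear_combination X t i * hp i
  have e2 : ∑ i, (s - w i) * θ i ≤ lam * J θ + ∑ i, (s - f i) * θ i := by
    have h1 := mul_le_mul_of_nonneg_left (hge θ) hlam.le
    have h2 : ∑ i, (s - w i) * θ i = lam * ∑ i, p i * θ i + ∑ i, (s - f i) * θ i := by
      rw [Finset.mul_sum, ← Finset.sum_add_distrib]
      refine Finset.sum_congr rfl fun i _ => ?_
      linear_combination -θ i * hp i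
    linarith
  rw [e1]
  refine le_trans (Finset.sum_le_sum fun i _ => ?_) e2
  by_cases h : w i ≥ s
  · rcases hθ i with h' | h' <;> simp [h, h'] <;> linarith
  · rcases hθ i with h' | h' <;> simp [h, h'] <;> linarith
end

section
/- Let N ≥ 1, let X = Fin N → ℝ with inner product ⟨u,v⟩ = Σᵢ uᵢvᵢ and norm ‖u‖, let J : X → ℝ be nonnegative, convex, lower semicontinuous, positively 1-homogeneous, and satisfy the generalized co-area formula J(u) = ∫_ℝ J(χ_{u>t}) dt for all u ∈ X. Let λ > 0, f ∈ X, let w minimize u ↦ J(u) + (1/(2λ))‖u − f‖², and let s ∈ ℝ. If χ_{w>s} = χ_{w≥s} (i.e. no pixel of w takes the value s), then the minimizer of θ ↦ λ·J(θ) + Σᵢ (s − fᵢ)θᵢ over all θ ∈ X with θᵢ ∈ {0,1} is unique (namely equal to χ_{w>s}). -/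
open MeasureTheory


lemma aux_level_integrable (N : ℕ) (hN : 1 ≤ N)
    (J : (Fin N → ℝ) → ℝ)
    (hJnonneg : ∀ u, 0 ≤ J u)
    (hJlsc : LowerSemicontinuous J)
    (hJ0 : J (fun _ => 0) = 0)
    (hJcoarea : ∀ u : Fin N → ℝ,
      J u = ∫ t : ℝ, J (fun i => if u i > t then (1 : ℝ) else 0)) (u : Fin N → ℝ) :
    Integrable (fun t : ℝ => J (fun i => if u i > t then (1 : ℝ) else 0)) := by
  have hJ1 : J (fun _ => 1) = 0 := by
    have h := hJcoarea (fun _ => 1)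
    have h2 : (fun t : ℝ => J (fun _ => if (1 : ℝ) > t then (1 : ℝ) else 0))
        = Set.indicator (Set.Iio 1) (fun _ => J (fun _ => 1)) := by
      funext t
      by_cases ht : t < 1 <;> simp [ht, Set.indicator, hJ0]
    rw [h, h2, integral_indicator measurableSet_Iio]
    simp [Measure.real]
  have hmeas : Measurable (fun t : ℝ => J (fun i => if u i > t then (1 : ℝ) else 0)) := by
    apply hJlsc.measurable.comp
    apply measurable_pi_lambda
    intro i
    exact Measurable.ite (measurableSet_lt measurable_id measurable_const)
      measurable_const measurable_const
  have hfin : (Set.univ.pi (fun _ : Fin N => ({0, 1} : Set ℝ))).Finite :=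
    Set.Finite.pi (fun _ => Set.toFinite _)
  obtain ⟨C, hC⟩ := (hfin.image J).bddAbove
  have hbd : ∀ t : ℝ, J (fun i => if u i > t then (1 : ℝ) else 0) ≤ C := by
    intro t
    apply hC
    refine ⟨_, ?_, rfl⟩
    intro i _
    by_cases h : u i > t <;> simp [h]
  have habs : ∀ i, |u i| ≤ ∑ j, |u j| := fun i =>
    Finset.single_le_sum (f := fun j => |u j|) (fun j _ => abs_nonneg _) (Finset.mem_univ i)
  set R := ∑ j, |u j| with hR
  have hsupp : Function.support (fun t : ℝ => J (fun i => if u i > t then (1 : ℝ) else 0))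
      ⊆ Set.Icc (-R) R := by
    intro t ht
    by_contra hcon
    apply ht
    rw [Set.mem_Icc, not_and_or, not_le, not_le] at hcon
    rcases hcon with h | h
    · have : (fun i => if u i > t then (1 : ℝ) else 0) = fun _ => 1 := by
        funext i
        have := (abs_le.1 (habs i)).1
        rw [if_pos (by linarith)]
      simp only [this, hJ1]
    · have : (fun i => if u i > t then (1 : ℝ) else 0) = fun _ => 0 := by
        funext i
        have := (abs_le.1 (habs i)).2
        rw [if_neg (by linarith)]
      simp only [this, hJ0]
  rw [← integrableOn_iff_integrable_of_support_subset hsupp]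
  refine Measure.integrableOn_of_bounded (M := C) (by simp) hmeas.aestronglyMeasurable ?_
  refine Filter.Eventually.of_forall (fun t => ?_)
  rw [Real.norm_eq_abs, abs_of_nonneg (hJnonneg _)]
  exact hbd t

lemma aux_variational (N : ℕ)
    (J : (Fin N → ℝ) → ℝ)
    (hJconvex : ConvexOn ℝ Set.univ J)
    (lam : ℝ) (hlam : 0 < lam) (f : Fin N → ℝ) (w : Fin N → ℝ)
    (hw : ∀ u : Fin N → ℝ,
      J w + (1 / (2 * lam)) * ∑ i, (w i - f i) ^ 2 ≤
      J u + (1 / (2 * lam)) * ∑ i, (u i - f i) ^ 2) (v : Fin N → ℝ) :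
    ∑ i, (f i - w i) * v i ≤ lam * (J (w + v) - J w) := by
  have key : ∀ t : ℝ, 0 < t → t ≤ 1 →
      ∑ i, (f i - w i) * v i ≤ lam * (J (w + v) - J w) + t * ((∑ i, v i ^ 2) / 2) := by
    intro t ht ht1
    have h1 := hw (w + t • v)
    have h2 := hJconvex.2 (Set.mem_univ w) (Set.mem_univ (w + v)) (sub_nonneg.2 ht1) ht.le
      (by ring)
    have h3 : (1 - t) • w + t • (w + v) = w + t • v := by
      funext i; simp; ring
    rw [h3] at h2
    simp only [smul_eq_mul] at h2
    have h4 : ∑ i, ((w + t • v) i - f i) ^ 2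
        = ∑ i, (w i - f i) ^ 2 - 2 * t * ∑ i, (f i - w i) * v i + t ^ 2 * ∑ i, v i ^ 2 := by
      rw [Finset.mul_sum, Finset.mul_sum, ← Finset.sum_sub_distrib, ← Finset.sum_add_distrib]
      refine Finset.sum_congr rfl (fun i _ => ?_)
      simp; ring
    rw [h4] at h1
    set A := ∑ i, (f i - w i) * v i
    set B := ∑ i, v i ^ 2
    set D := ∑ i, (w i - f i) ^ 2
    have h5 : 0 ≤ t * (J (w + v) - J w) + (1 / (2 * lam)) * (- 2 * t * A + t ^ 2 * B) := by
      nlinarith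
    have h6 : t * (lam * (J (w + v) - J w) + t * (B / 2) - A) =
        lam * (t * (J (w + v) - J w) + (1 / (2 * lam)) * (- 2 * t * A + t ^ 2 * B)) := by
      field_simp; ring
    have h7 : 0 ≤ t * (lam * (J (w + v) - J w) + t * (B / 2) - A) := by
      rw [h6]; positivity
    have := nonneg_of_mul_nonneg_right h7 ht
    linarith
  have hB : 0 ≤ (∑ i, v i ^ 2) / 2 := by positivity
  set B := (∑ i, v i ^ 2) / 2
  apply le_of_forall_pos_le_add
  intro e he
  have hB1 : 0 < B + 1 := by linarith
  refine (key (min 1 (e / (B + 1))) (by positivity) (min_le_left _ _)).trans ?_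
  have : min 1 (e / (B + 1)) * B ≤ e := by
    calc min 1 (e / (B + 1)) * B ≤ e / (B + 1) * (B + 1) := by
          apply mul_le_mul (min_le_right _ _) (by linarith) hB (by positivity)
      _ = e := by field_simp
  linarith

/-- If the strict and non-strict level sets of the ROF minimizer at level `s` coincide,
then the shape optimization problem has a unique minimizer, namely `χ_{w>s}`. -/
theorem shape_optimization_unique_minimizer
    (N : ℕ) (hN : 1 ≤ N)
    (J : (Fin N → ℝ) → ℝ)
    (hJnonneg : ∀ u, 0 ≤ J u)
    (hJconvex : ConvexOn ℝ Set.univ J)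
    (hJlsc : LowerSemicontinuous J)
    (hJhom : ∀ t : ℝ, 0 ≤ t → ∀ u : Fin N → ℝ, J (t • u) = t * J u)
    (hJcoarea : ∀ u : Fin N → ℝ,
      J u = ∫ t : ℝ, J (fun i => if u i > t then (1 : ℝ) else 0))
    (lam : ℝ) (hlam : 0 < lam) (f : Fin N → ℝ) (w : Fin N → ℝ)
    (hw : ∀ u : Fin N → ℝ,
      J w + (1 / (2 * lam)) * ∑ i, (w i - f i) ^ 2 ≤
      J u + (1 / (2 * lam)) * ∑ i, (u i - f i) ^ 2)
    (s : ℝ)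
    (hlevel : (fun i => if w i > s then (1 : ℝ) else 0) =
              (fun i => if w i ≥ s then (1 : ℝ) else 0)) :
    ∀ θ : Fin N → ℝ, (∀ i, θ i = 0 ∨ θ i = 1) →
      (∀ θ' : Fin N → ℝ, (∀ i, θ' i = 0 ∨ θ' i = 1) →
        lam * J θ + ∑ i, (s - f i) * θ i ≤ lam * J θ' + ∑ i, (s - f i) * θ' i) →
      θ = (fun i => if w i > s then (1 : ℝ) else 0) := by
  have hJ0 : J (fun _ => 0) = 0 := by
    have := hJhom 0 le_rfl 0
    rw [zero_smul, zero_mul] at this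
    exact this
  have hne : ∀ i, w i ≠ s := by
    intro i hi
    have := congrFun hlevel i
    simp [hi] at this
  have hlevInt := aux_level_integrable N hN J hJnonneg hJlsc hJ0 hJcoarea
  have hvar := aux_variational N J hJconvex lam hlam f w hw
  -- a gap above the level
  obtain ⟨e, he, hgap⟩ : ∃ e : ℝ, 0 < e ∧ ∀ i, s < w i → s + e < w i := by
    have hev : ∀ᶠ e : ℝ in nhdsWithin 0 (Set.Ioi 0), ∀ i, s < w i → s + e < w i := by
      rw [Filter.eventually_all]
      intro i
      by_cases h : s < w i
      · have : Set.Iio (w i - s) ∈ nhdsWithin (0 : ℝ) (Set.Ioi 0) :=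
          mem_nhdsWithin_of_mem_nhds (Iio_mem_nhds (by linarith))
        filter_upwards [this] with e he _
        have := Set.mem_Iio.1 he
        linarith
      · exact Filter.Eventually.of_forall (fun e h' => absurd h' h)
    obtain ⟨e, h1, h2⟩ := (hev.and self_mem_nhdsWithin).exists
    exact ⟨e, h2, h1⟩
  set E : Fin N → ℝ := fun i => if w i > s then (1 : ℝ) else 0 with hE
  -- coarea decomposition
  have hdec : J w = J (w + (-e) • E) + e * J E := by
    set h : ℝ → ℝ := fun t => J (fun i => if w i > t then (1 : ℝ) else 0) with hh
    set h' : ℝ → ℝ := fun t => J (fun i => if (w + (-e) • E) i > t then (1 : ℝ) else 0) with hh'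
    have hi : Integrable h := hlevInt w
    have hi' : Integrable h' := hlevInt _
    have e1 : J w = ∫ t, h t := hJcoarea w
    have e2 : J (w + (-e) • E) = ∫ t, h' t := hJcoarea _
    have s1 : ∫ t, h t = (∫ t in Set.Iic s, h t) + ∫ t in Set.Ioi s, h t :=
      (intervalIntegral.integral_Iic_add_Ioi hi.integrableOn hi.integrableOn).symm
    have s2 : ∫ t, h' t = (∫ t in Set.Iic s, h' t) + ∫ t in Set.Ioi s, h' t :=
      (intervalIntegral.integral_Iic_add_Ioi hi'.integrableOn hi'.integrableOn).symm
    have s3 : ∫ t in Set.Ioi s, h t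
        = (∫ t in Set.Ioc s (s + e), h t) + ∫ t in Set.Ioi (s + e), h t := by
      rw [← setIntegral_union (Set.Ioc_disjoint_Ioi le_rfl) measurableSet_Ioi
        hi.integrableOn hi.integrableOn, Set.Ioc_union_Ioi_eq_Ioi (by linarith)]
    have a1 : ∫ t in Set.Iic s, h t = ∫ t in Set.Iic s, h' t := by
      refine setIntegral_congr_fun measurableSet_Iic (fun t ht => ?_)
      have ht : t ≤ s := ht
      simp only [hh, hh']
      congr 1
      funext i
      by_cases hwi : s < w i
      · have := hgap i hwi
        have hEi : E i = 1 := by simp [hE, hwi]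
        have c1 : w i > t := by linarith
        have c2 : (w + (-e) • E) i > t := by simp [hEi]; linarith
        rw [if_pos c1, if_pos c2]
      · have hEi : E i = 0 := by simp [hE, hwi]
        simp [hEi]
    have a2 : ∫ t in Set.Ioc s (s + e), h t = e * J E := by
      have : ∫ t in Set.Ioc s (s + e), h t = ∫ t in Set.Ioc s (s + e), J E := by
        refine setIntegral_congr_fun measurableSet_Ioc (fun t ht => ?_)
        simp only [hh, hE]
        congr 1
        funext i
        by_cases hwi : s < w i
        · have := hgap i hwi
          rw [if_pos (by linarith [ht.2]), if_pos hwi]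
        · rw [if_neg (by linarith [ht.1]), if_neg hwi]
      rw [this]
      simp [he.le]
    have a3 : ∫ t in Set.Ioi (s + e), h t = ∫ t in Set.Ioi s, h' t := by
      have : ∫ t in Set.Ioi s, h' t = ∫ t in Set.Ioi s, h (t + e) := by
        refine setIntegral_congr_fun measurableSet_Ioi (fun t ht => ?_)
        have ht : s < t := ht
        simp only [hh, hh']
        congr 1
        funext i
        by_cases hwi : s < w i
        · have hEi : E i = 1 := by simp [hE, hwi]
          have : (w + (-e) • E) i > t ↔ w i > t + e := by
            simp only [Pi.add_apply, Pi.smul_apply, hEi, smul_eq_mul]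
            constructor <;> intro <;> linarith
          simp only [this]
        · have hEi : E i = 0 := by simp [hE, hwi]
          have c1 : ¬ (w + (-e) • E) i > t := by simp [hEi]; linarith
          have c2 : ¬ w i > t + e := by linarith
          rw [if_neg c1, if_neg c2]
      rw [this, ← integral_indicator measurableSet_Ioi, ← integral_indicator measurableSet_Ioi,
        ← integral_add_right_eq_self _ e]
      congr 1
      funext t
      simp [Set.indicator]
    rw [e1, e2, s1, s2, s3, a1, a2, a3]
    ring
  have hJE : lam * J E ≤ ∑ i, (f i - w i) * E i := by
    have h1 := hvar ((-e) • E)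
    have h2 : ∑ i, (f i - w i) * ((-e) • E) i = - e * ∑ i, (f i - w i) * E i := by
      rw [Finset.mul_sum]
      refine Finset.sum_congr rfl (fun i _ => ?_)
      simp; ring
    rw [h2, hdec] at h1
    have h3 : e * (lam * J E) ≤ e * ∑ i, (f i - w i) * E i := by linarith
    exact le_of_mul_le_mul_left h3 he
  intro θ hθ hmin
  have hJθ : ∑ i, (f i - w i) * θ i ≤ lam * J θ := by
    refine (hvar θ).trans (mul_le_mul_of_nonneg_left ?_ hlam.le)
    have h2 := hJconvex.2 (Set.mem_univ w) (Set.mem_univ θ) (by norm_num : (0:ℝ) ≤ 1/2)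
      (by norm_num : (0:ℝ) ≤ 1/2) (by norm_num)
    rw [← smul_add, hJhom _ (by norm_num)] at h2
    simp only [smul_eq_mul] at h2
    linarith
  have hEm := hmin E (fun i => by by_cases h : w i > s <;> simp [hE, h])
  have hsum : ∑ i, (w i - s) * (E i - θ i) ≤ 0 := by
    have : ∑ i, (w i - s) * (E i - θ i) = (∑ i, (f i - w i) * θ i + ∑ i, (s - f i) * θ i)
        - (∑ i, (f i - w i) * E i + ∑ i, (s - f i) * E i) := by
      rw [← Finset.sum_add_distrib, ← Finset.sum_add_distrib, ← Finset.sum_sub_distrib]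
      exact Finset.sum_congr rfl (fun i _ => by ring)
    rw [this]
    linarith
  have hnn : ∀ i ∈ Finset.univ, 0 ≤ (w i - s) * (E i - θ i) := by
    intro i _
    by_cases h : w i > s
    · have hEi : E i = 1 := by simp [hE, h]
      rw [hEi]
      apply mul_nonneg (by linarith)
      rcases hθ i with h | h <;> rw [h] <;> norm_num
    · have hEi : E i = 0 := by simp [hE, h]
      rw [hEi]
      apply mul_nonneg_of_nonpos_of_nonpos (by linarith)
      rcases hθ i with h | h <;> rw [h] <;> norm_num
  have hz := (Finset.sum_eq_zero_iff_of_nonneg hnn).1 (le_antisymm hsum (Finset.sum_nonneg hnn))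
  funext i
  rcases mul_eq_zero.1 (hz i (Finset.mem_univ i)) with h | h
  · exact absurd (sub_eq_zero.1 h) (hne i)
  · exact (sub_eq_zero.1 h).symm
end

section
/- Let n, m ≥ 1 and let J : ((Fin n × Fin m) → ℝ) → ℝ be the discrete Manhattan total variation J(u) = Σ_{i,j} (|(∇ˣu)_{i,j}| + |(∇ʸu)_{i,j}|). Then J satisfies the generalized co-area formula: for every u, J(u) = ∫_ℝ J(χ_{u>t}) dt, where (χ_{u>t})_{i,j} = 1 if u_{i,j} > t and 0 otherwise. -/
open MeasureTheory

/-- Discrete gradient in the x-direction with Neumann boundary conditions. -/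
def gradX {n m : ℕ} (u : Fin n × Fin m → ℝ) (q : Fin n × Fin m) : ℝ :=
  if h : (q.1 : ℕ) + 1 < n then u (⟨(q.1 : ℕ) + 1, h⟩, q.2) - u q else 0

/-- Discrete gradient in the y-direction with Neumann boundary conditions. -/
def gradY {n m : ℕ} (u : Fin n × Fin m → ℝ) (q : Fin n × Fin m) : ℝ :=
  if h : (q.2 : ℕ) + 1 < m then u (q.1, ⟨(q.2 : ℕ) + 1, h⟩) - u q else 0

/-- The discrete Manhattan total variation. -/
def manhattanTV {n m : ℕ} (u : Fin n × Fin m → ℝ) : ℝ :=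
  ∑ q : Fin n × Fin m, (|gradX u q| + |gradY u q|)

theorem coarea_abs_eq (a b t : ℝ) :
    |(if a > t then (1 : ℝ) else 0) - (if b > t then (1 : ℝ) else 0)| =
      (Set.Ico (min a b) (max a b)).indicator (fun _ => (1 : ℝ)) t := by
  classical
  rw [Set.indicator_apply]
  by_cases h1 : a > t <;> by_cases h2 : b > t <;>
    simp [Set.mem_Ico, h1, h2] <;> grind

theorem coarea_integrable (a b : ℝ) :
    Integrable (fun t : ℝ =>
      |(if a > t then (1 : ℝ) else 0) - (if b > t then (1 : ℝ) else 0)|) := by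
  simp_rw [coarea_abs_eq]
  rw [integrable_indicator_iff measurableSet_Ico]
  exact integrableOn_const (by simp)

theorem coarea_integral (a b : ℝ) :
    ∫ t : ℝ, |(if a > t then (1 : ℝ) else 0) - (if b > t then (1 : ℝ) else 0)| =
      |a - b| := by
  simp_rw [coarea_abs_eq]
  rw [integral_indicator measurableSet_Ico]
  simp [max_sub_min_eq_abs, abs_sub_comm]

theorem coarea_gradX {n m : ℕ} (u : Fin n × Fin m → ℝ) (q : Fin n × Fin m) :
    Integrable (fun t : ℝ => |gradX (fun q => if u q > t then (1 : ℝ) else 0) q|) ∧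
    ∫ t : ℝ, |gradX (fun q => if u q > t then (1 : ℝ) else 0) q| = |gradX u q| := by
  unfold gradX
  split_ifs with h
  · exact ⟨coarea_integrable _ _, coarea_integral _ _⟩
  · simp

theorem coarea_gradY {n m : ℕ} (u : Fin n × Fin m → ℝ) (q : Fin n × Fin m) :
    Integrable (fun t : ℝ => |gradY (fun q => if u q > t then (1 : ℝ) else 0) q|) ∧
    ∫ t : ℝ, |gradY (fun q => if u q > t then (1 : ℝ) else 0) q| = |gradY u q| := by
  unfold gradY
  split_ifs with h
  · exact ⟨coarea_integrable _ _, coarea_integral _ _⟩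
  · simp

/-- The discrete Manhattan total variation satisfies the generalized co-area formula. -/
theorem manhattanTV_coarea (n m : ℕ) (hn : 1 ≤ n) (hm : 1 ≤ m)
    (u : Fin n × Fin m → ℝ) :
    manhattanTV u =
      ∫ t : ℝ, manhattanTV (fun q => if u q > t then (1 : ℝ) else 0) := by
  unfold manhattanTV
  rw [integral_finsetSum]
  swap
  · exact fun q _ => (coarea_gradX u q).1.add (coarea_gradY u q).1
  refine Finset.sum_congr rfl fun q _ => ?_
  rw [integral_add (coarea_gradX u q).1 (coarea_gradY u q).1, (coarea_gradX u q).2,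
    (coarea_gradY u q).2]
end

section
/- Let n, m ≥ 1, let g : Fin n × Fin m → ℝ with g ≥ 0, and let TV_{1,π/4,g} be the g-weighted Manhattan total variation with diagonal terms. Then TV_{1,π/4,g} satisfies the generalized co-area formula: for every u : Fin n × Fin m → ℝ, TV_{1,π/4,g}(u) = ∫_ℝ TV_{1,π/4,g}(χ_{u>t}) dt, where (χ_{u>t})_{i,j} = 1 if u_{i,j} > t and 0 otherwise. -/
open MeasureTheory

/-- Discrete diagonal gradient (direction (1,1)) with Neumann boundary conditions. -/
noncomputable def gradXY {n m : ℕ} (u : Fin n × Fin m → ℝ) (q : Fin n × Fin m) : ℝ :=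
  if h : (q.1 : ℕ) + 1 < n ∧ (q.2 : ℕ) + 1 < m then
    (Real.sqrt 2)⁻¹ * (u (⟨(q.1 : ℕ) + 1, h.1⟩, ⟨(q.2 : ℕ) + 1, h.2⟩) - u q)
  else 0

/-- Discrete diagonal gradient (direction (-1,1)) with Neumann boundary conditions. -/
noncomputable def gradYX {n m : ℕ} (u : Fin n × Fin m → ℝ) (q : Fin n × Fin m) : ℝ :=
  if h : 0 < (q.1 : ℕ) ∧ (q.2 : ℕ) + 1 < m then
    (Real.sqrt 2)⁻¹ *
      (u (⟨(q.1 : ℕ) - 1, lt_of_le_of_lt (Nat.sub_le _ _) q.1.isLt⟩,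
          ⟨(q.2 : ℕ) + 1, h.2⟩) - u q)
  else 0

/-- The g-weighted Manhattan total variation with diagonal terms. -/
noncomputable def wTV {n m : ℕ} (g : Fin n × Fin m → ℝ) (u : Fin n × Fin m → ℝ) : ℝ :=
  (1 / 2) * ∑ q : Fin n × Fin m,
    g q * (|gradX u q| + |gradY u q| + |gradXY u q| + |gradYX u q|)

/-- The layer-cake identity in one difference, with integrability. -/
theorem coarea_pair (a b : ℝ) :
    Integrable (fun t : ℝ => |(if a > t then (1 : ℝ) else 0) - (if b > t then (1 : ℝ) else 0)|) ∧
    ∫ t : ℝ, |(if a > t then (1 : ℝ) else 0) - (if b > t then (1 : ℝ) else 0)| = |a - b| := by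
  have h : (fun t : ℝ => |(if a > t then (1 : ℝ) else 0) - (if b > t then (1 : ℝ) else 0)|)
      = (Set.Ico (min a b) (max a b)).indicator (fun _ => (1 : ℝ)) := by
    funext t
    simp only [Set.indicator, Set.mem_Ico, min_le_iff, lt_max_iff, gt_iff_lt]
    by_cases h1 : t < a <;> by_cases h2 : t < b
    · simp [h1, h2, not_le.mpr h1, not_le.mpr h2]
    · simp [h1, h2, not_lt.mp h2]
    · simp [h1, h2, not_lt.mp h1]
    · simp [h1, h2]
  rw [h]
  constructor
  · rw [integrable_indicator_iff measurableSet_Ico]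
    exact integrableOn_const (by simp)
  · rw [integral_indicator measurableSet_Ico]
    simp [max_sub_min_eq_abs, abs_sub_comm]

theorem coarea_pair_mul (c a b : ℝ) :
    Integrable (fun t : ℝ =>
      |c * ((if a > t then (1 : ℝ) else 0) - (if b > t then (1 : ℝ) else 0))|) ∧
    ∫ t : ℝ, |c * ((if a > t then (1 : ℝ) else 0) - (if b > t then (1 : ℝ) else 0))|
      = |c * (a - b)| := by
  simp only [abs_mul]
  exact ⟨(coarea_pair a b).1.const_mul _, by rw [integral_const_mul, (coarea_pair a b).2]⟩

theorem coarea_gradXY {n m : ℕ} (u : Fin n × Fin m → ℝ) (q : Fin n × Fin m) :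
    Integrable (fun t : ℝ => |gradXY (fun q => if u q > t then (1 : ℝ) else 0) q|) ∧
    ∫ t : ℝ, |gradXY (fun q => if u q > t then (1 : ℝ) else 0) q| = |gradXY u q| := by
  unfold gradXY
  split_ifs with h
  · exact coarea_pair_mul _ _ _
  · simp

theorem coarea_gradYX {n m : ℕ} (u : Fin n × Fin m → ℝ) (q : Fin n × Fin m) :
    Integrable (fun t : ℝ => |gradYX (fun q => if u q > t then (1 : ℝ) else 0) q|) ∧
    ∫ t : ℝ, |gradYX (fun q => if u q > t then (1 : ℝ) else 0) q| = |gradYX u q| := by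
  unfold gradYX
  split_ifs with h
  · exact coarea_pair_mul _ _ _
  · simp

/-- The weighted Manhattan TV with diagonal terms satisfies the generalized
co-area formula. -/
theorem wTV_coarea (n m : ℕ) (hn : 1 ≤ n) (hm : 1 ≤ m)
    (g : Fin n × Fin m → ℝ) (hg : ∀ q, 0 ≤ g q)
    (u : Fin n × Fin m → ℝ) :
    wTV g u = ∫ t : ℝ, wTV g (fun q => if u q > t then (1 : ℝ) else 0) := by
  unfold wTV
  have hX := coarea_gradX u
  have hY := coarea_gradY u
  have hXY := coarea_gradXY u
  have hYX := coarea_gradYX u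
  rw [integral_const_mul, integral_finsetSum]
  · congr 1
    refine Finset.sum_congr rfl fun q _ => ?_
    rw [integral_const_mul, integral_add (((hX q).1.fun_add (hY q).1).fun_add (hXY q).1) (hYX q).1,
      integral_add ((hX q).1.fun_add (hY q).1) (hXY q).1, integral_add (hX q).1 (hY q).1,
      (hX q).2, (hY q).2, (hXY q).2, (hYX q).2]
  · intro q _
    exact ((((hX q).1.fun_add (hY q).1).fun_add (hXY q).1).fun_add (hYX q).1).const_mul _
end

section
/- The discrete standard (isotropic) total variation TV₂(u) = Σ_{i,j} √((∇ˣu)_{i,j}² + (∇ʸu)_{i,j}²) does not satisfy the generalized co-area formula: there exist n, m ≥ 1 and u : Fin n × Fin m → ℝ such that TV₂(u) ≠ ∫_ℝ TV₂(χ_{u>t}) dt, where (χ_{u>t})_{i,j} = 1 if u_{i,j} > t and 0 otherwise. -/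
open MeasureTheory

/-- The discrete standard (isotropic) total variation. -/
noncomputable def isoTV {n m : ℕ} (u : Fin n × Fin m → ℝ) : ℝ :=
  ∑ q : Fin n × Fin m, Real.sqrt ((gradX u q) ^ 2 + (gradY u q) ^ 2)

/-- The discrete standard (isotropic) total variation does not satisfy the
generalized co-area formula. -/
theorem isoTV_not_coarea :
    ∃ (n m : ℕ), 1 ≤ n ∧ 1 ≤ m ∧ ∃ u : Fin n × Fin m → ℝ,
      isoTV u ≠ ∫ t : ℝ, isoTV (fun q => if u q > t then (1 : ℝ) else 0) := by
  refine ⟨2, 2, by norm_num, by norm_num,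
    fun q => ((q.1 : ℕ) : ℝ) - ((q.2 : ℕ) : ℝ), ?_⟩
  have key : (fun t : ℝ => isoTV (fun q : Fin 2 × Fin 2 =>
      if ((q.1 : ℕ) : ℝ) - ((q.2 : ℕ) : ℝ) > t then (1 : ℝ) else 0))
      = Set.indicator (Set.Ico (-1) 1) (fun _ => (2 : ℝ)) := by
    funext t
    simp only [isoTV, gradX, gradY, Fintype.sum_prod_type, Fin.sum_univ_two, Set.indicator,
      Set.mem_Ico]
    rcases lt_or_ge t (-1) with h1 | h1
    · have h2 : t < 0 := by linarith
      have h3 : t < 1 := by linarith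
      have h4 : ¬ (-1 ≤ t) := by linarith
      simp [h1, h2, h3, h4]
    · rcases lt_or_ge t 0 with h2 | h2
      · have h3 : t < 1 := by linarith
        have h4 : ¬ (t < -1) := by linarith
        simp [h1, h2, h3, h4]
        try norm_num
      · have h4 : ¬ (t < -1) := by linarith
        have h5 : ¬ (t < 0) := by linarith
        rcases lt_or_ge t 1 with h3 | h3
        · simp [h1, h3, h4, h5]
          try norm_num
        · have h6 : ¬ (t < 1) := by linarith
          simp [h4, h5, h6]
  rw [key, integral_indicator measurableSet_Ico]
  have hs : Real.sqrt 2 < 2 := by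
    rw [Real.sqrt_lt' (by norm_num)]; norm_num
  simp [isoTV, gradX, gradY, Fintype.sum_prod_type, Fin.sum_univ_two]
  norm_num
  intro h
  linarith
end

section
/- Let n, m ≥ 1 and g : Fin n × Fin m → ℝ with g ≥ 0. For every w : Fin n × Fin m → ℝ, TV_{1,π/4,g}(w) = sup_{v ∈ K} ⟨w, v⟩, where K = { div(g·ξ) + div'(g·η) : ξ, η ∈ A } with A the set of pairs of fields bounded pointwise by 1, and div, div' the negative adjoints of the axis and diagonal discrete gradients respectively. -/
/-- The discrete divergence: the negative adjoint of the gradient `(∇ˣ, ∇ʸ)`. -/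
def divv {n m : ℕ} (px py : Fin n × Fin m → ℝ) (q : Fin n × Fin m) : ℝ :=
  (if (q.1 : ℕ) + 1 < n then px q else 0) -
    (if 0 < (q.1 : ℕ) then
      px (⟨(q.1 : ℕ) - 1, lt_of_le_of_lt (Nat.sub_le _ _) q.1.isLt⟩, q.2) else 0) +
  (if (q.2 : ℕ) + 1 < m then py q else 0) -
    (if 0 < (q.2 : ℕ) then
      py (q.1, ⟨(q.2 : ℕ) - 1, lt_of_le_of_lt (Nat.sub_le _ _) q.2.isLt⟩) else 0)

/-- The diagonal discrete divergence: the negative adjoint of the diagonal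
gradient pair `(∇^{xy}, ∇^{yx})`. -/
noncomputable def divv' {n m : ℕ} (f1 f2 : Fin n × Fin m → ℝ) (q : Fin n × Fin m) : ℝ :=
  (Real.sqrt 2)⁻¹ *
    ((if (q.1 : ℕ) + 1 < n ∧ (q.2 : ℕ) + 1 < m then f1 q else 0) -
      (if 0 < (q.1 : ℕ) ∧ 0 < (q.2 : ℕ) then
        f1 (⟨(q.1 : ℕ) - 1, lt_of_le_of_lt (Nat.sub_le _ _) q.1.isLt⟩,
            ⟨(q.2 : ℕ) - 1, lt_of_le_of_lt (Nat.sub_le _ _) q.2.isLt⟩) else 0) +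
      (if 0 < (q.1 : ℕ) ∧ (q.2 : ℕ) + 1 < m then f2 q else 0) -
      (if h : (q.1 : ℕ) + 1 < n ∧ 0 < (q.2 : ℕ) then
        f2 (⟨(q.1 : ℕ) + 1, h.1⟩,
            ⟨(q.2 : ℕ) - 1, lt_of_le_of_lt (Nat.sub_le _ _) q.2.isLt⟩) else 0))

/-- Reindexing of a sum along a partial bijection. -/
theorem sum_shift {ι : Type*} [Fintype ι] (P Q : ι → Prop) [DecidablePred P] [DecidablePred Q]
    (s : ∀ q, P q → ι) (t : ∀ q, Q q → ι)
    (hs : ∀ q h, ∃ h' : Q (s q h), t (s q h) h' = q)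
    (ht : ∀ q h, ∃ h' : P (t q h), s (t q h) h' = q) (F : ι → ι → ℝ) :
    ∑ q, (if h : P q then F q (s q h) else 0) = ∑ q, (if h : Q q then F (t q h) q else 0) := by
  classical
  refine Finset.sum_bij_ne_zero
    (fun q _ hq => s q (by by_contra h; simp [h] at hq)) ?_ ?_ ?_ ?_
  · intro a _ _
    exact Finset.mem_univ _
  · intro a _ ha b _ hb hab
    have pa : P a := by by_contra h; simp [h] at ha
    have pb : P b := by by_contra h; simp [h] at hb
    obtain ⟨h1, e1⟩ := hs a pa
    obtain ⟨h2, e2⟩ := hs b pb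
    rw [← e1, ← e2]
    have hab' : s a pa = s b pb := hab
    congr 1
  · intro b _ hb
    have qb : Q b := by by_contra h; simp [h] at hb
    obtain ⟨h1, e1⟩ := ht b qb
    refine ⟨t b qb, Finset.mem_univ _, ?_, e1⟩
    rw [dif_pos h1, e1]
    rwa [dif_pos qb] at hb
  · intro a _ ha
    have pa : P a := by by_contra h; simp [h] at ha
    obtain ⟨h1, e1⟩ := hs a pa
    have e : (if h : Q (s a pa) then F (t (s a pa) h) (s a pa) else 0) = F a (s a pa) := by
      rw [dif_pos h1, e1]
    exact (dif_pos pa).trans e.symm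

theorem adjX {n m : ℕ} (w p : Fin n × Fin m → ℝ) :
    ∑ q, w q * ((if (q.1 : ℕ) + 1 < n then p q else 0) -
      (if 0 < (q.1 : ℕ) then
        p (⟨(q.1 : ℕ) - 1, lt_of_le_of_lt (Nat.sub_le _ _) q.1.isLt⟩, q.2) else 0)) =
      - ∑ q, p q * gradX w q := by
  have key := sum_shift (fun q : Fin n × Fin m => (q.1 : ℕ) + 1 < n)
    (fun q => 0 < (q.1 : ℕ))
    (fun q h => (⟨(q.1 : ℕ) + 1, h⟩, q.2))
    (fun q _ => (⟨(q.1 : ℕ) - 1, lt_of_le_of_lt (Nat.sub_le _ _) q.1.isLt⟩, q.2))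
    (by rintro ⟨⟨i, hi⟩, ⟨j, hj⟩⟩ h; simp)
    (by rintro ⟨⟨i, hi⟩, ⟨j, hj⟩⟩ h
        simp only at h ⊢
        exact ⟨by omega, by ext <;> simp <;> omega⟩)
    (fun a b => w b * p a)
  have e1 : ∑ q, p q * gradX w q =
      ∑ q : Fin n × Fin m, (if h : (q.1 : ℕ) + 1 < n then w (⟨(q.1 : ℕ) + 1, h⟩, q.2) * p q else 0)
      - ∑ q : Fin n × Fin m, w q * (if (q.1 : ℕ) + 1 < n then p q else 0) := by
    rw [← Finset.sum_sub_distrib]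
    refine Finset.sum_congr rfl fun q _ => ?_
    unfold gradX
    split_ifs <;> ring
  rw [e1, key, neg_sub, ← Finset.sum_sub_distrib]
  refine Finset.sum_congr rfl fun q _ => ?_
  split_ifs <;> ring

theorem adjY {n m : ℕ} (w p : Fin n × Fin m → ℝ) :
    ∑ q, w q * ((if (q.2 : ℕ) + 1 < m then p q else 0) -
      (if 0 < (q.2 : ℕ) then
        p (q.1, ⟨(q.2 : ℕ) - 1, lt_of_le_of_lt (Nat.sub_le _ _) q.2.isLt⟩) else 0)) =
      - ∑ q, p q * gradY w q := by
  have key := sum_shift (fun q : Fin n × Fin m => (q.2 : ℕ) + 1 < m)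
    (fun q => 0 < (q.2 : ℕ))
    (fun q h => (q.1, ⟨(q.2 : ℕ) + 1, h⟩))
    (fun q _ => (q.1, ⟨(q.2 : ℕ) - 1, lt_of_le_of_lt (Nat.sub_le _ _) q.2.isLt⟩))
    (by rintro ⟨⟨i, hi⟩, ⟨j, hj⟩⟩ h; simp)
    (by rintro ⟨⟨i, hi⟩, ⟨j, hj⟩⟩ h
        simp only at h ⊢
        exact ⟨by omega, by ext <;> simp <;> omega⟩)
    (fun a b => w b * p a)
  have e1 : ∑ q, p q * gradY w q =
      ∑ q : Fin n × Fin m, (if h : (q.2 : ℕ) + 1 < m then w (q.1, ⟨(q.2 : ℕ) + 1, h⟩) * p q else 0)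
      - ∑ q : Fin n × Fin m, w q * (if (q.2 : ℕ) + 1 < m then p q else 0) := by
    rw [← Finset.sum_sub_distrib]
    refine Finset.sum_congr rfl fun q _ => ?_
    unfold gradY
    split_ifs <;> ring
  rw [e1, key, neg_sub, ← Finset.sum_sub_distrib]
  refine Finset.sum_congr rfl fun q _ => ?_
  split_ifs <;> ring

theorem adjXY {n m : ℕ} (w p : Fin n × Fin m → ℝ) :
    ∑ q, w q * ((Real.sqrt 2)⁻¹ *
      ((if (q.1 : ℕ) + 1 < n ∧ (q.2 : ℕ) + 1 < m then p q else 0) -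
      (if 0 < (q.1 : ℕ) ∧ 0 < (q.2 : ℕ) then
        p (⟨(q.1 : ℕ) - 1, lt_of_le_of_lt (Nat.sub_le _ _) q.1.isLt⟩,
            ⟨(q.2 : ℕ) - 1, lt_of_le_of_lt (Nat.sub_le _ _) q.2.isLt⟩) else 0))) =
      - ∑ q, p q * gradXY w q := by
  have key := sum_shift (fun q : Fin n × Fin m => (q.1 : ℕ) + 1 < n ∧ (q.2 : ℕ) + 1 < m)
    (fun q => 0 < (q.1 : ℕ) ∧ 0 < (q.2 : ℕ))
    (fun q h => (⟨(q.1 : ℕ) + 1, h.1⟩, ⟨(q.2 : ℕ) + 1, h.2⟩))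
    (fun q _ => (⟨(q.1 : ℕ) - 1, lt_of_le_of_lt (Nat.sub_le _ _) q.1.isLt⟩,
      ⟨(q.2 : ℕ) - 1, lt_of_le_of_lt (Nat.sub_le _ _) q.2.isLt⟩))
    (by rintro ⟨⟨i, hi⟩, ⟨j, hj⟩⟩ h; simp)
    (by rintro ⟨⟨i, hi⟩, ⟨j, hj⟩⟩ h
        simp only at h ⊢
        exact ⟨by omega, by ext <;> simp <;> omega⟩)
    (fun a b => w b * ((Real.sqrt 2)⁻¹ * p a))
  have e1 : ∑ q, p q * gradXY w q =
      ∑ q : Fin n × Fin m, (if h : (q.1 : ℕ) + 1 < n ∧ (q.2 : ℕ) + 1 < m then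
        w (⟨(q.1 : ℕ) + 1, h.1⟩, ⟨(q.2 : ℕ) + 1, h.2⟩) * ((Real.sqrt 2)⁻¹ * p q) else 0)
      - ∑ q : Fin n × Fin m, w q * ((Real.sqrt 2)⁻¹ *
        (if (q.1 : ℕ) + 1 < n ∧ (q.2 : ℕ) + 1 < m then p q else 0)) := by
    rw [← Finset.sum_sub_distrib]
    refine Finset.sum_congr rfl fun q _ => ?_
    unfold gradXY
    split_ifs <;> ring
  rw [e1, key, neg_sub, ← Finset.sum_sub_distrib]
  refine Finset.sum_congr rfl fun q _ => ?_
  split_ifs <;> ring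

theorem adjYX {n m : ℕ} (w p : Fin n × Fin m → ℝ) :
    ∑ q, w q * ((Real.sqrt 2)⁻¹ *
      ((if 0 < (q.1 : ℕ) ∧ (q.2 : ℕ) + 1 < m then p q else 0) -
      (if h : (q.1 : ℕ) + 1 < n ∧ 0 < (q.2 : ℕ) then
        p (⟨(q.1 : ℕ) + 1, h.1⟩,
            ⟨(q.2 : ℕ) - 1, lt_of_le_of_lt (Nat.sub_le _ _) q.2.isLt⟩) else 0))) =
      - ∑ q, p q * gradYX w q := by
  have key := sum_shift (fun q : Fin n × Fin m => 0 < (q.1 : ℕ) ∧ (q.2 : ℕ) + 1 < m)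
    (fun q => (q.1 : ℕ) + 1 < n ∧ 0 < (q.2 : ℕ))
    (fun q h => (⟨(q.1 : ℕ) - 1, lt_of_le_of_lt (Nat.sub_le _ _) q.1.isLt⟩,
      ⟨(q.2 : ℕ) + 1, h.2⟩))
    (fun q h => (⟨(q.1 : ℕ) + 1, h.1⟩,
      ⟨(q.2 : ℕ) - 1, lt_of_le_of_lt (Nat.sub_le _ _) q.2.isLt⟩))
    (by rintro ⟨⟨i, hi⟩, ⟨j, hj⟩⟩ h
        simp only at h ⊢
        exact ⟨by omega, by ext <;> simp <;> omega⟩)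
    (by rintro ⟨⟨i, hi⟩, ⟨j, hj⟩⟩ h
        simp only at h ⊢
        exact ⟨by omega, by ext <;> simp <;> omega⟩)
    (fun a b => w b * ((Real.sqrt 2)⁻¹ * p a))
  have e1 : ∑ q, p q * gradYX w q =
      ∑ q : Fin n × Fin m, (if h : 0 < (q.1 : ℕ) ∧ (q.2 : ℕ) + 1 < m then
        w (⟨(q.1 : ℕ) - 1, lt_of_le_of_lt (Nat.sub_le _ _) q.1.isLt⟩,
          ⟨(q.2 : ℕ) + 1, h.2⟩) * ((Real.sqrt 2)⁻¹ * p q) else 0)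
      - ∑ q : Fin n × Fin m, w q * ((Real.sqrt 2)⁻¹ *
        (if 0 < (q.1 : ℕ) ∧ (q.2 : ℕ) + 1 < m then p q else 0)) := by
    rw [← Finset.sum_sub_distrib]
    refine Finset.sum_congr rfl fun q _ => ?_
    unfold gradYX
    split_ifs <;> ring
  rw [e1, key, neg_sub, ← Finset.sum_sub_distrib]
  refine Finset.sum_congr rfl fun q _ => ?_
  split_ifs <;> ring

theorem pairing_eq {n m : ℕ} (w a b c d : Fin n × Fin m → ℝ) :
    ∑ q, w q * ((1 / 2) * (divv a b q + divv' c d q)) =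
      (1 / 2) * ∑ q, (-(a q * gradX w q) - b q * gradY w q - c q * gradXY w q
        - d q * gradYX w q) := by
  simp only [Finset.sum_sub_distrib, Finset.sum_neg_distrib]
  rw [sub_eq_add_neg, sub_eq_add_neg, sub_eq_add_neg, ← adjX, ← adjY, ← adjXY, ← adjYX,
    ← Finset.sum_add_distrib, ← Finset.sum_add_distrib, ← Finset.sum_add_distrib,
    Finset.mul_sum]
  refine Finset.sum_congr rfl fun q _ => ?_
  unfold divv divv'
  ring

theorem term_le (g x y : ℝ) (hg : 0 ≤ g) (hx : |x| ≤ 1) : -(g * x * y) ≤ g * |y| := by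
  have h1 : -(x * y) ≤ |y| := by
    calc -(x * y) ≤ |x * y| := neg_le_abs _
      _ = |x| * |y| := abs_mul _ _
      _ ≤ 1 * |y| := mul_le_mul_of_nonneg_right hx (abs_nonneg _)
      _ = |y| := one_mul _
  have := mul_le_mul_of_nonneg_left h1 hg
  linarith

theorem exists_sgn {ι : Type*} (f : ι → ℝ) :
    ∃ x : ι → ℝ, (∀ q, |x q| ≤ 1) ∧ ∀ q, x q * f q = -|f q| := by
  refine ⟨fun q => if 0 ≤ f q then -1 else 1, fun q => ?_, fun q => ?_⟩
  · dsimp only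
    split_ifs <;> simp
  · dsimp only
    split_ifs with h
    · rw [abs_of_nonneg h]; ring
    · rw [abs_of_neg (not_le.mp h)]; ring

/-- Duality formula: the weighted Manhattan TV with diagonal terms is the support
function of the convex set `K = {(1/2)(div(g·ξ) + div'(g·η)) : ξ, η ∈ A}`. -/
theorem wTV_eq_sup_over_K (n m : ℕ) (hn : 1 ≤ n) (hm : 1 ≤ m)
    (g : Fin n × Fin m → ℝ) (hg : ∀ q, 0 ≤ g q)
    (w : Fin n × Fin m → ℝ) :
    IsLUB {x : ℝ | ∃ ξx ξy ηx ηy : Fin n × Fin m → ℝ,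
        (∀ q, |ξx q| ≤ 1) ∧ (∀ q, |ξy q| ≤ 1) ∧
        (∀ q, |ηx q| ≤ 1) ∧ (∀ q, |ηy q| ≤ 1) ∧
        x = ∑ q : Fin n × Fin m,
          w q * ((1 / 2) * (divv (fun r => g r * ξx r) (fun r => g r * ξy r) q +
            divv' (fun r => g r * ηx r) (fun r => g r * ηy r) q))}
      (wTV g w) := by
  constructor
  · rintro x ⟨a, b, c, d, ha, hb, hc, hd, rfl⟩
    rw [pairing_eq]
    unfold wTV
    refine mul_le_mul_of_nonneg_left (Finset.sum_le_sum fun q _ => ?_) (by norm_num)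
    have h1 := term_le (g q) (a q) (gradX w q) (hg q) (ha q)
    have h2 := term_le (g q) (b q) (gradY w q) (hg q) (hb q)
    have h3 := term_le (g q) (c q) (gradXY w q) (hg q) (hc q)
    have h4 := term_le (g q) (d q) (gradYX w q) (hg q) (hd q)
    linarith
  · intro y hy
    obtain ⟨a, ha, ea⟩ := exists_sgn (gradX w)
    obtain ⟨b, hb, eb⟩ := exists_sgn (gradY w)
    obtain ⟨c, hc, ec⟩ := exists_sgn (gradXY w)
    obtain ⟨d, hd, ed⟩ := exists_sgn (gradYX w)
    refine hy ⟨a, b, c, d, ha, hb, hc, hd, ?_⟩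
    rw [pairing_eq]
    unfold wTV
    congr 1
    refine Finset.sum_congr rfl fun q _ => ?_
    simp only [mul_assoc, ea, eb, ec, ed]
    ring
end

section
/- Let n, m ≥ 1, λ > 0, w₀ : Fin n × Fin m → ℝ, and let J(w) = Σ_{i,j} |(∇w)_{i,j}| where |(∇w)_{i,j}| = √((∇ˣw)_{i,j}² + (∇ʸw)_{i,j}²). Let ξ̄ minimize ξ ↦ ‖λ·div ξ − w₀‖² over all vector fields ξ with (ξˣ_{i,j})² + (ξʸ_{i,j})² ≤ 1 for all i,j. Then w̄ = w₀ − λ·div ξ̄ is the unique minimizer over all w of the energy J(w) + (1/(2λ))‖w − w₀‖². -/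
theorem adj1 (n : ℕ) (f g : Fin n → ℝ) :
    ∑ i : Fin n, ((if (i : ℕ) + 1 < n then f i else 0) -
      (if 0 < (i : ℕ) then f ⟨(i : ℕ) - 1, lt_of_le_of_lt (Nat.sub_le _ _) i.isLt⟩ else 0)) * g i
    = -∑ i : Fin n, f i * (if h : (i : ℕ) + 1 < n then g ⟨(i : ℕ) + 1, h⟩ - g i else 0) := by
  cases n with
  | zero => simp
  | succ k =>
    have h1 : ∑ i : Fin (k+1), (if (i : ℕ) + 1 < k + 1 then f i else 0) * g i
        = ∑ i : Fin k, f i.castSucc * g i.castSucc := by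
      rw [Fin.sum_univ_castSucc]; simp
    have h2 : ∑ i : Fin (k+1), (if 0 < (i : ℕ) then
        f ⟨(i : ℕ) - 1, lt_of_le_of_lt (Nat.sub_le _ _) i.isLt⟩ else 0) * g i
        = ∑ i : Fin k, f i.castSucc * g i.succ := by
      rw [Fin.sum_univ_succ]; simp; rfl
    have h3 : ∑ i : Fin (k+1), f i *
        (if h : (i : ℕ) + 1 < k + 1 then g ⟨(i : ℕ) + 1, h⟩ - g i else 0)
        = ∑ i : Fin k, f i.castSucc * (g i.succ - g i.castSucc) := by
      rw [Fin.sum_univ_castSucc]; simp; rfl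
    rw [h3]
    simp only [sub_mul, Finset.sum_sub_distrib, mul_sub]
    rw [h1, h2]; ring

theorem adj2 {n m : ℕ} (px py w : Fin n × Fin m → ℝ) :
    ∑ q, divv px py q * w q = -∑ q, (px q * gradX w q + py q * gradY w q) := by
  have hx : ∑ q : Fin n × Fin m, ((if (q.1 : ℕ) + 1 < n then px q else 0) -
    (if 0 < (q.1 : ℕ) then
      px (⟨(q.1 : ℕ) - 1, lt_of_le_of_lt (Nat.sub_le _ _) q.1.isLt⟩, q.2) else 0)) * w q
      = -∑ q, px q * gradX w q := by
    rw [Fintype.sum_prod_type_right, Fintype.sum_prod_type_right, ← Finset.sum_neg_distrib]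
    refine Finset.sum_congr rfl fun j _ => ?_
    exact adj1 n (fun i => px (i, j)) (fun i => w (i, j))
  have hy : ∑ q : Fin n × Fin m, ((if (q.2 : ℕ) + 1 < m then py q else 0) -
    (if 0 < (q.2 : ℕ) then
      py (q.1, ⟨(q.2 : ℕ) - 1, lt_of_le_of_lt (Nat.sub_le _ _) q.2.isLt⟩) else 0)) * w q
      = -∑ q, py q * gradY w q := by
    rw [Fintype.sum_prod_type, Fintype.sum_prod_type, ← Finset.sum_neg_distrib]
    refine Finset.sum_congr rfl fun i _ => ?_
    exact adj1 m (fun j => py (i, j)) (fun j => w (i, j))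
  rw [Finset.sum_add_distrib, neg_add, ← hx, ← hy, ← Finset.sum_add_distrib]
  refine Finset.sum_congr rfl fun q _ => ?_
  unfold divv; ring

theorem divv_comb {n m : ℕ} (ax ay bx bY : Fin n × Fin m → ℝ) (t : ℝ) (q : Fin n × Fin m) :
    divv (fun r => ax r + t * (bx r - ax r)) (fun r => ay r + t * (bY r - ay r)) q
      = divv ax ay q + t * (divv bx bY q - divv ax ay q) := by
  unfold divv; split_ifs <;> ring

theorem div_le_J {n m : ℕ} (px py w : Fin n × Fin m → ℝ) (hp : ∀ q, px q ^ 2 + py q ^ 2 ≤ 1) :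
    ∑ q, divv px py q * w q ≤ ∑ q, Real.sqrt (gradX w q ^ 2 + gradY w q ^ 2) := by
  rw [adj2, ← Finset.sum_neg_distrib]
  refine Finset.sum_le_sum fun q _ => ?_
  apply Real.le_sqrt_of_sq_le
  have := hp q
  nlinarith [sq_nonneg (px q * gradY w q - py q * gradX w q),
    mul_nonneg (sub_nonneg.2 this) (add_nonneg (sq_nonneg (gradX w q)) (sq_nonneg (gradY w q)))]

theorem J_attained {n m : ℕ} (w : Fin n × Fin m → ℝ) :
    ∃ px py : Fin n × Fin m → ℝ, (∀ q, px q ^ 2 + py q ^ 2 ≤ 1) ∧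
    ∑ q, divv px py q * w q = ∑ q, Real.sqrt (gradX w q ^ 2 + gradY w q ^ 2) := by
  refine ⟨fun q => -gradX w q / Real.sqrt (gradX w q ^ 2 + gradY w q ^ 2),
    fun q => -gradY w q / Real.sqrt (gradX w q ^ 2 + gradY w q ^ 2), fun q => ?_, ?_⟩
  · have h : 0 ≤ gradX w q ^ 2 + gradY w q ^ 2 := by positivity
    simp only [div_pow, neg_sq, Real.sq_sqrt h, ← add_div]
    exact div_self_le_one _
  · rw [adj2, ← Finset.sum_neg_distrib]
    refine Finset.sum_congr rfl fun q _ => ?_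
    have h : 0 ≤ gradX w q ^ 2 + gradY w q ^ 2 := by positivity
    have h2 := Real.div_sqrt (x := gradX w q ^ 2 + gradY w q ^ 2)
    refine Eq.trans ?_ h2
    ring

/-- Chambolle's projection characterization of the isotropic ROF minimizer. -/
theorem isoROF_solution_via_projection (n m : ℕ) (hn : 1 ≤ n) (hm : 1 ≤ m)
    (lam : ℝ) (hlam : 0 < lam)
    (w₀ : Fin n × Fin m → ℝ)
    (ξx ξy : Fin n × Fin m → ℝ)
    (hξ : ∀ q, (ξx q) ^ 2 + (ξy q) ^ 2 ≤ 1)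
    (hmin : ∀ px py : Fin n × Fin m → ℝ, (∀ q, (px q) ^ 2 + (py q) ^ 2 ≤ 1) →
      ∑ q : Fin n × Fin m, (lam * divv ξx ξy q - w₀ q) ^ 2 ≤
        ∑ q : Fin n × Fin m, (lam * divv px py q - w₀ q) ^ 2) :
    (∀ w : Fin n × Fin m → ℝ,
      (∑ q : Fin n × Fin m,
          Real.sqrt ((gradX (fun r => w₀ r - lam * divv ξx ξy r) q) ^ 2 +
            (gradY (fun r => w₀ r - lam * divv ξx ξy r) q) ^ 2)) +
        (1 / (2 * lam)) * ∑ q : Fin n × Fin m,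
          ((w₀ q - lam * divv ξx ξy q) - w₀ q) ^ 2 ≤
      (∑ q : Fin n × Fin m, Real.sqrt ((gradX w q) ^ 2 + (gradY w q) ^ 2)) +
        (1 / (2 * lam)) * ∑ q : Fin n × Fin m, (w q - w₀ q) ^ 2) ∧
    (∀ w : Fin n × Fin m → ℝ,
      (∀ w' : Fin n × Fin m → ℝ,
        (∑ q : Fin n × Fin m, Real.sqrt ((gradX w q) ^ 2 + (gradY w q) ^ 2)) +
            (1 / (2 * lam)) * ∑ q : Fin n × Fin m, (w q - w₀ q) ^ 2 ≤
          (∑ q : Fin n × Fin m, Real.sqrt ((gradX w' q) ^ 2 + (gradY w' q) ^ 2)) +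
            (1 / (2 * lam)) * ∑ q : Fin n × Fin m, (w' q - w₀ q) ^ 2) →
      w = fun q => w₀ q - lam * divv ξx ξy q) := by
  have key : ∀ px py : Fin n × Fin m → ℝ, (∀ q, px q ^ 2 + py q ^ 2 ≤ 1) →
      0 ≤ ∑ q, (lam * divv ξx ξy q - w₀ q) * (divv px py q - divv ξx ξy q) := by
    intro px py hp
    set A := ∑ q, (lam * divv ξx ξy q - w₀ q) * (divv px py q - divv ξx ξy q) with hA
    set B := ∑ q, (divv px py q - divv ξx ξy q) ^ 2 with hB
    have hB0 : 0 ≤ B := Finset.sum_nonneg fun q _ => sq_nonneg _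
    have hq : ∀ t : ℝ, 0 < t → t ≤ 1 → 0 ≤ 2 * A + t * (lam * B) := by
      intro t ht ht1
      have h := hmin (fun r => ξx r + t * (px r - ξx r)) (fun r => ξy r + t * (py r - ξy r)) (by
        intro q
        have h1 := hξ q
        have h2 := hp q
        have h3 : 0 ≤ t * (1 - t) := mul_nonneg ht.le (by linarith)
        have h4 := mul_nonneg h3 (add_nonneg (sq_nonneg (px q - ξx q)) (sq_nonneg (py q - ξy q)))
        have h5 := mul_le_mul_of_nonneg_left h1 (by linarith : (0:ℝ) ≤ 1 - t)
        have h6 := mul_le_mul_of_nonneg_left h2 ht.le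
        nlinarith)
      have e : ∑ q, (lam * divv (fun r => ξx r + t * (px r - ξx r))
            (fun r => ξy r + t * (py r - ξy r)) q - w₀ q) ^ 2
          = ∑ q, (lam * divv ξx ξy q - w₀ q) ^ 2 + (t * lam) * (2 * A + t * (lam * B)) := by
        rw [hA, hB]
        simp only [Finset.mul_sum, ← Finset.sum_add_distrib]
        refine Finset.sum_congr rfl fun q _ => ?_
        rw [divv_comb]; ring
      rw [e] at h
      exact nonneg_of_mul_nonneg_right (by linarith) (mul_pos ht hlam)
    by_contra hneg
    push Not at hneg
    have hC : 0 ≤ lam * B := by positivity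
    have hd : 0 < lam * B - A := by linarith
    have h := hq (-A / (lam * B - A)) (div_pos (by linarith) hd)
      ((div_le_one hd).2 (by linarith))
    have h2 : -A / (lam * B - A) * (lam * B) ≤ -A := by
      rw [div_mul_eq_mul_div, div_le_iff₀ hd]
      nlinarith
    linarith
  have main : ∀ w : Fin n × Fin m → ℝ,
      ((∑ q : Fin n × Fin m,
          Real.sqrt ((gradX (fun r => w₀ r - lam * divv ξx ξy r) q) ^ 2 +
            (gradY (fun r => w₀ r - lam * divv ξx ξy r) q) ^ 2)) +
        (1 / (2 * lam)) * ∑ q : Fin n × Fin m,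
          ((w₀ q - lam * divv ξx ξy q) - w₀ q) ^ 2) +
        (1 / (2 * lam)) * ∑ q : Fin n × Fin m, (w q - (w₀ q - lam * divv ξx ξy q)) ^ 2 ≤
      (∑ q : Fin n × Fin m, Real.sqrt ((gradX w q) ^ 2 + (gradY w q) ^ 2)) +
        (1 / (2 * lam)) * ∑ q : Fin n × Fin m, (w q - w₀ q) ^ 2 := by
    intro w
    have h1 := div_le_J ξx ξy w hξ
    obtain ⟨px, py, hp, h2⟩ := J_attained (fun r => w₀ r - lam * divv ξx ξy r)
    have h3 := key px py hp
    have h4 : ∑ q, (lam * divv ξx ξy q - w₀ q) * (divv px py q - divv ξx ξy q)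
        = ∑ q, divv ξx ξy q * (w₀ q - lam * divv ξx ξy q)
          - ∑ q, divv px py q * (w₀ q - lam * divv ξx ξy q) := by
      rw [← Finset.sum_sub_distrib]
      exact Finset.sum_congr rfl fun q _ => by ring
    have h5 : (1 / (2 * lam)) * ∑ q : Fin n × Fin m, (w q - w₀ q) ^ 2
        = (1 / (2 * lam)) * ∑ q : Fin n × Fin m, ((w₀ q - lam * divv ξx ξy q) - w₀ q) ^ 2
          + (1 / (2 * lam)) * ∑ q : Fin n × Fin m, (w q - (w₀ q - lam * divv ξx ξy q)) ^ 2
          + ∑ q, divv ξx ξy q * (w₀ q - lam * divv ξx ξy q) - ∑ q, divv ξx ξy q * w q := by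
      simp only [Finset.mul_sum, ← Finset.sum_add_distrib, ← Finset.sum_sub_distrib]
      refine Finset.sum_congr rfl fun q _ => ?_
      field_simp
      ring
    linarith
  have hl : 0 < 1 / (2 * lam) := by positivity
  refine ⟨fun w => ?_, fun w hw => ?_⟩
  · have h := main w
    have h0 : 0 ≤ ∑ q : Fin n × Fin m, (w q - (w₀ q - lam * divv ξx ξy q)) ^ 2 :=
      Finset.sum_nonneg fun q _ => sq_nonneg _
    have := mul_nonneg hl.le h0
    linarith
  · have h := main w
    have h' := hw (fun q => w₀ q - lam * divv ξx ξy q)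
    have h0 : ∑ q : Fin n × Fin m, (w q - (w₀ q - lam * divv ξx ξy q)) ^ 2 ≤ 0 := by
      by_contra hc
      push Not at hc
      have := mul_pos hl hc
      linarith
    have h1 := (Finset.sum_eq_zero_iff_of_nonneg (fun q _ => sq_nonneg _)).1
      (le_antisymm h0 (Finset.sum_nonneg fun q _ => sq_nonneg _))
    funext q
    have := pow_eq_zero_iff (two_ne_zero) |>.1 (h1 q (Finset.mem_univ q))
    linarith
end

section
/- Let n, m ≥ 1. The negative adjoint div' of the diagonal gradient pair (∇^{xy}, ∇^{yx}) is the operator satisfying ⟨div' f, w⟩ = −⟨f¹, ∇^{xy}w⟩ − ⟨f², ∇^{yx}w⟩ for all w and every vector field f = (f¹, f²). It is given explicitly by (div' f)_{i,j} = −(the coefficient of w_{i,j} in ⟨f¹,∇^{xy}w⟩ + ⟨f²,∇^{yx}w⟩), which for interior pixels (0 < i < n−1, 0 < j < m−1, using the Neumann conventions) equals (1/√2)(f¹_{i,j} − f¹_{i−1,j−1} + f²_{i,j} − f²_{i+1,j−1}). -/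
lemma sum_shift_aux {ι : Type*} [Fintype ι] (R : ι → ι → Prop) [DecidableRel R]
    (G : ι → ι → ℝ) (A B : ι → ℝ)
    (hA : ∀ q, (∃ p, R q p ∧ (∀ p', R q p' → p' = p) ∧ A q = G q p) ∨ ((∀ p, ¬ R q p) ∧ A q = 0))
    (hB : ∀ p, (∃ q, R q p ∧ (∀ q', R q' p → q' = q) ∧ B p = G q p) ∨ ((∀ q, ¬ R q p) ∧ B p = 0)) :
    ∑ q, A q = ∑ p, B p := by
  have h1 : ∀ q, A q = ∑ p, if R q p then G q p else 0 := by
    intro q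
    rcases hA q with ⟨p, hp, hu, h⟩ | ⟨hn, h⟩
    · rw [h, Finset.sum_eq_single p]
      · simp [hp]
      · intro p' _ hne
        rw [if_neg (fun hr => hne (hu p' hr))]
      · simp
    · simp [h, hn]
  have h2 : ∀ p, B p = ∑ q, if R q p then G q p else 0 := by
    intro p
    rcases hB p with ⟨q, hq, hu, h⟩ | ⟨hn, h⟩
    · rw [h, Finset.sum_eq_single q]
      · simp [hq]
      · intro q' _ hne
        rw [if_neg (fun hr => hne (hu q' hr))]
      · simp
    · simp [h, hn]
  simp_rw [h1, h2]
  exact Finset.sum_comm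

lemma shiftXY {n m : ℕ} (f w : Fin n × Fin m → ℝ) :
    ∑ q : Fin n × Fin m, (if h : (q.1 : ℕ) + 1 < n ∧ (q.2 : ℕ) + 1 < m then
      f q * w (⟨(q.1 : ℕ) + 1, h.1⟩, ⟨(q.2 : ℕ) + 1, h.2⟩) else 0) =
    ∑ q : Fin n × Fin m, (if 0 < (q.1 : ℕ) ∧ 0 < (q.2 : ℕ) then
        f (⟨(q.1 : ℕ) - 1, lt_of_le_of_lt (Nat.sub_le _ _) q.1.isLt⟩,
            ⟨(q.2 : ℕ) - 1, lt_of_le_of_lt (Nat.sub_le _ _) q.2.isLt⟩) else 0) * w q := by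
  apply sum_shift_aux (fun q p => (p.1 : ℕ) = q.1 + 1 ∧ (p.2 : ℕ) = q.2 + 1)
    (fun q p => f q * w p)
  · rintro ⟨⟨i, hi⟩, ⟨j, hj⟩⟩
    by_cases h : i + 1 < n ∧ j + 1 < m
    · refine Or.inl ⟨(⟨i + 1, h.1⟩, ⟨j + 1, h.2⟩), by simp, ?_, by simp [h]⟩
      rintro ⟨⟨a, ha⟩, ⟨b, hb⟩⟩ h'
      simpa using h'
    · refine Or.inr ⟨?_, by simp only [h, dite_false]⟩
      rintro ⟨⟨a, ha⟩, ⟨b, hb⟩⟩ h'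
      dsimp only at h'
      omega
  · rintro ⟨⟨i, hi⟩, ⟨j, hj⟩⟩
    by_cases h : 0 < i ∧ 0 < j
    · refine Or.inl ⟨(⟨i - 1, by omega⟩, ⟨j - 1, by omega⟩), by dsimp only; omega, ?_,
        by simp only [h, and_self, if_true]⟩
      rintro ⟨⟨a, ha⟩, ⟨b, hb⟩⟩ h'
      simp only [Prod.mk.injEq, Fin.mk.injEq] at h' ⊢
      omega
    · refine Or.inr ⟨?_, by simp only [h, if_false, zero_mul]⟩
      rintro ⟨⟨a, ha⟩, ⟨b, hb⟩⟩ h'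
      dsimp only at h'
      omega

lemma shiftYX {n m : ℕ} (f w : Fin n × Fin m → ℝ) :
    ∑ q : Fin n × Fin m, (if h : 0 < (q.1 : ℕ) ∧ (q.2 : ℕ) + 1 < m then
      f q * w (⟨(q.1 : ℕ) - 1, lt_of_le_of_lt (Nat.sub_le _ _) q.1.isLt⟩,
        ⟨(q.2 : ℕ) + 1, h.2⟩) else 0) =
    ∑ q : Fin n × Fin m, (if h : (q.1 : ℕ) + 1 < n ∧ 0 < (q.2 : ℕ) then
        f (⟨(q.1 : ℕ) + 1, h.1⟩,
            ⟨(q.2 : ℕ) - 1, lt_of_le_of_lt (Nat.sub_le _ _) q.2.isLt⟩) else 0) * w q := by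
  apply sum_shift_aux (fun q p => (q.1 : ℕ) = p.1 + 1 ∧ (p.2 : ℕ) = q.2 + 1)
    (fun q p => f q * w p)
  · rintro ⟨⟨i, hi⟩, ⟨j, hj⟩⟩
    by_cases h : 0 < i ∧ j + 1 < m
    · refine Or.inl ⟨(⟨i - 1, by omega⟩, ⟨j + 1, h.2⟩), by dsimp only; omega, ?_, by simp [h]⟩
      rintro ⟨⟨a, ha⟩, ⟨b, hb⟩⟩ h'
      simp only [Prod.mk.injEq, Fin.mk.injEq] at h' ⊢
      omega
    · refine Or.inr ⟨?_, by simp only [h, dite_false]⟩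
      rintro ⟨⟨a, ha⟩, ⟨b, hb⟩⟩ h'
      dsimp only at h'
      omega
  · rintro ⟨⟨i, hi⟩, ⟨j, hj⟩⟩
    by_cases h : i + 1 < n ∧ 0 < j
    · refine Or.inl ⟨(⟨i + 1, h.1⟩, ⟨j - 1, by omega⟩), by dsimp only; omega, ?_,
        by simp [h]⟩
      rintro ⟨⟨a, ha⟩, ⟨b, hb⟩⟩ h'
      simp only [Prod.mk.injEq, Fin.mk.injEq] at h' ⊢
      omega
    · refine Or.inr ⟨?_, by simp only [h, dite_false, zero_mul]⟩
      rintro ⟨⟨a, ha⟩, ⟨b, hb⟩⟩ h'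
      dsimp only at h'
      omega

/-- The explicit formula for the diagonal divergence: it is the negative adjoint of the
diagonal gradient pair, and at interior pixels it is given by
`(1/√2)(f¹_{i,j} − f¹_{i−1,j−1} + f²_{i,j} − f²_{i+1,j−1})`. -/
theorem divv'_adjoint_and_interior_formula (n m : ℕ) (hn : 1 ≤ n) (hm : 1 ≤ m) :
    (∀ f1 f2 w : Fin n × Fin m → ℝ,
      ∑ q : Fin n × Fin m, divv' f1 f2 q * w q =
        -(∑ q : Fin n × Fin m, f1 q * gradXY w q) -
          ∑ q : Fin n × Fin m, f2 q * gradYX w q) ∧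
    (∀ f1 f2 : Fin n × Fin m → ℝ, ∀ q : Fin n × Fin m,
      ∀ hi0 : 0 < (q.1 : ℕ), ∀ hi1 : (q.1 : ℕ) + 1 < n,
      ∀ hj0 : 0 < (q.2 : ℕ), ∀ hj1 : (q.2 : ℕ) + 1 < m,
      divv' f1 f2 q =
        (Real.sqrt 2)⁻¹ *
          (f1 q -
            f1 (⟨(q.1 : ℕ) - 1, lt_of_le_of_lt (Nat.sub_le _ _) q.1.isLt⟩,
                ⟨(q.2 : ℕ) - 1, lt_of_le_of_lt (Nat.sub_le _ _) q.2.isLt⟩) +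
            f2 q -
            f2 (⟨(q.1 : ℕ) + 1, hi1⟩,
                ⟨(q.2 : ℕ) - 1, lt_of_le_of_lt (Nat.sub_le _ _) q.2.isLt⟩))) := by
  constructor
  · intro f1 f2 w
    have e1 : ∑ q : Fin n × Fin m, f1 q * gradXY w q = (Real.sqrt 2)⁻¹ *
        (∑ q : Fin n × Fin m, (if h : (q.1 : ℕ) + 1 < n ∧ (q.2 : ℕ) + 1 < m then
          f1 q * w (⟨(q.1 : ℕ) + 1, h.1⟩, ⟨(q.2 : ℕ) + 1, h.2⟩) else 0) -
        ∑ q : Fin n × Fin m,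
          (if (q.1 : ℕ) + 1 < n ∧ (q.2 : ℕ) + 1 < m then f1 q else 0) * w q) := by
      rw [← Finset.sum_sub_distrib, Finset.mul_sum]
      refine Finset.sum_congr rfl fun q _ => ?_
      unfold gradXY
      split_ifs <;> ring
    have e2 : ∑ q : Fin n × Fin m, f2 q * gradYX w q = (Real.sqrt 2)⁻¹ *
        (∑ q : Fin n × Fin m, (if h : 0 < (q.1 : ℕ) ∧ (q.2 : ℕ) + 1 < m then
          f2 q * w (⟨(q.1 : ℕ) - 1, lt_of_le_of_lt (Nat.sub_le _ _) q.1.isLt⟩,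
            ⟨(q.2 : ℕ) + 1, h.2⟩) else 0) -
        ∑ q : Fin n × Fin m,
          (if 0 < (q.1 : ℕ) ∧ (q.2 : ℕ) + 1 < m then f2 q else 0) * w q) := by
      rw [← Finset.sum_sub_distrib, Finset.mul_sum]
      refine Finset.sum_congr rfl fun q _ => ?_
      unfold gradYX
      split_ifs <;> ring
    rw [e1, e2, shiftXY, shiftYX, ← Finset.sum_sub_distrib, ← Finset.sum_sub_distrib,
      Finset.mul_sum, Finset.mul_sum, ← Finset.sum_neg_distrib, ← Finset.sum_sub_distrib]
    refine Finset.sum_congr rfl fun q _ => ?_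
    unfold divv'
    ring
  · intro f1 f2 q hi0 hi1 hj0 hj1
    simp [divv', hi0, hi1, hj0, hj1]
end

section
/- Let n, m ≥ 1. For every vector field p = (pˣ, pʸ) of functions Fin n × Fin m → ℝ, the discrete divergence satisfies the operator-norm bound ‖div p‖² ≤ 8·(‖pˣ‖² + ‖pʸ‖²), where div p is the negative adjoint of the gradient (∇ˣ, ∇ʸ). -/
theorem shift_sum_le {n : ℕ} (f : Fin n → ℝ) :
    ∑ i : Fin n, (if 0 < (i : ℕ) then
      f ⟨(i : ℕ) - 1, lt_of_le_of_lt (Nat.sub_le _ _) i.isLt⟩ else 0) ^ 2 ≤ ∑ i, f i ^ 2 := by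
  cases n with
  | zero => simp
  | succ k =>
    rw [Fin.sum_univ_succ, Fin.sum_univ_castSucc (fun i => f i ^ 2)]
    have h : ∀ i : Fin k, (if 0 < (i.succ : ℕ) then
        f ⟨(i.succ : ℕ) - 1, lt_of_le_of_lt (Nat.sub_le _ _) i.succ.isLt⟩ else 0) ^ 2
        = f i.castSucc ^ 2 := by
      intro i
      rw [if_pos (by simp)]
      rfl
    rw [Finset.sum_congr rfl (fun i _ => h i)]
    have := sq_nonneg (f (Fin.last k))
    simp
    exact this

/-- The operator-norm bound for the discrete divergence: `‖div p‖² ≤ 8(‖pˣ‖² + ‖pʸ‖²)`. -/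
theorem divv_norm_sq_le (n m : ℕ) (hn : 1 ≤ n) (hm : 1 ≤ m)
    (px py : Fin n × Fin m → ℝ) :
    ∑ q : Fin n × Fin m, (divv px py q) ^ 2 ≤
      8 * ((∑ q : Fin n × Fin m, (px q) ^ 2) + ∑ q : Fin n × Fin m, (py q) ^ 2) := by
  have h1 : ∑ q : Fin n × Fin m, (if 0 < (q.1 : ℕ) then
      px (⟨(q.1 : ℕ) - 1, lt_of_le_of_lt (Nat.sub_le _ _) q.1.isLt⟩, q.2) else 0) ^ 2
      ≤ ∑ q, px q ^ 2 := by
    rw [Fintype.sum_prod_type_right, Fintype.sum_prod_type_right]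
    exact Finset.sum_le_sum fun j _ => shift_sum_le (fun i => px (i, j))
  have h2 : ∑ q : Fin n × Fin m, (if 0 < (q.2 : ℕ) then
      py (q.1, ⟨(q.2 : ℕ) - 1, lt_of_le_of_lt (Nat.sub_le _ _) q.2.isLt⟩) else 0) ^ 2
      ≤ ∑ q, py q ^ 2 := by
    rw [Fintype.sum_prod_type, Fintype.sum_prod_type]
    exact Finset.sum_le_sum fun i _ => shift_sum_le (fun j => py (i, j))
  have key : ∀ a b c d A C : ℝ, a ^ 2 ≤ A → c ^ 2 ≤ C →
      (a - b + c - d) ^ 2 ≤ 4 * (A + b ^ 2 + C + d ^ 2) := by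
    intro a b c d A C hA hC
    nlinarith [sq_nonneg (a + b), sq_nonneg (a - c), sq_nonneg (a + d), sq_nonneg (b + c),
      sq_nonneg (b - d), sq_nonneg (c + d)]
  have hite : ∀ (P : Prop) [Decidable P] (x : ℝ), (if P then x else 0) ^ 2 ≤ x ^ 2 := by
    intro P _ x
    split_ifs
    · exact le_rfl
    · simpa using sq_nonneg x
  have h3 := Finset.sum_le_sum (s := Finset.univ) fun (q : Fin n × Fin m) _ =>
    key (if (q.1 : ℕ) + 1 < n then px q else 0)
      (if 0 < (q.1 : ℕ) then
        px (⟨(q.1 : ℕ) - 1, lt_of_le_of_lt (Nat.sub_le _ _) q.1.isLt⟩, q.2) else 0)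
      (if (q.2 : ℕ) + 1 < m then py q else 0)
      (if 0 < (q.2 : ℕ) then
        py (q.1, ⟨(q.2 : ℕ) - 1, lt_of_le_of_lt (Nat.sub_le _ _) q.2.isLt⟩) else 0)
      (px q ^ 2) (py q ^ 2) (hite _ _) (hite _ _)
  refine le_trans h3 ?_
  rw [← Finset.mul_sum, Finset.sum_add_distrib, Finset.sum_add_distrib, Finset.sum_add_distrib]
  linarith
end
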